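/- Let T be a complete CLO theory in a finite language L_κ (i.e., κ < ℵ₀). If T is locally simple, then T is ℵ₀-categorical. -/

import Mathlib

open FirstOrder Language Set

/-- Relation symbols of the language `L_κ` of colored linear orders:
a binary `<` and a unary color predicate for each `i : ι`. -/
inductive CLORel (ι : Type) : ℕ → Type
  | lt : CLORel ι 2
  | color (i : ι) : CLORel ι 1

/-- The language `L_κ`, where the colors are indexed by `ι`. -/
def CLOLang (ι : Type) : Language :=
  ⟨fun _ => Empty, CLORel ι⟩

/-- Interpretation of the relation symbols on a linear order `M` with colors `c`. -/
def cloRelMap {ι M : Type} [LinearOrder M] (c : ι → Set M) :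
    ∀ {n}, CLORel ι n → (Fin n → M) → Prop
  | _, .lt => fun v => v 0 < v 1
  | _, .color i => fun v => v 0 ∈ c i

/-- The canonical `L_κ`-structure (a colored linear order, CLO) on a linear
order `M` whose colors are given by `c : ι → Set M`. -/
def CLOStr (ι M : Type) [LinearOrder M] (c : ι → Set M) : (CLOLang ι).Structure M where
  funMap := fun f => Empty.elim f
  RelMap := cloRelMap c

/-- Satisfaction of an `L_κ`-formula in the CLO `(M, <, c)`. -/
def Sat {ι : Type} (M : Type) [LinearOrder M] (c : ι → Set M) {α : Type}
    (φ : (CLOLang ι).Formula α) (v : α → M) : Prop :=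
  letI := CLOStr ι M c
  φ.Realize v

/-- The induced colors on a subset of a CLO. -/
def subColor {ι M : Type} (c : ι → Set M) (s : Set M) : ι → Set s :=
  fun i => {x | (x : M) ∈ c i}

/-- Elementary equivalence of CLOs. -/
def CLOEquiv (ι : Type) (M : Type) [LinearOrder M] (cM : ι → Set M)
    (N : Type) [LinearOrder N] (cN : ι → Set N) : Prop :=
  letI := CLOStr ι M cM
  letI := CLOStr ι N cN
  M ≅[CLOLang ι] N

/-- Isomorphism of CLOs (as `L_κ`-structures). -/
def CLOIso (ι : Type) (M : Type) [LinearOrder M] (cM : ι → Set M)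
    (N : Type) [LinearOrder N] (cN : ι → Set N) : Prop :=
  letI := CLOStr ι M cM
  letI := CLOStr ι N cN
  Nonempty (M ≃[CLOLang ι] N)

/-- The complete theory of a CLO. -/
def CLOTheory (ι : Type) (M : Type) [LinearOrder M] (c : ι → Set M) : (CLOLang ι).Theory :=
  letI := CLOStr ι M c
  (CLOLang ι).completeTheory M

/-- The induced colors on a lexicographic sum `Σₗ i, A i` of CLOs. -/
def sigmaColor {ι I : Type} {A : I → Type} (c : ∀ i, ι → Set (A i)) :
    ι → Set (Σₗ i, A i) :=
  fun k => {x | (ofLex x).2 ∈ c (ofLex x).1 k}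

/-- The induced colors on a two-term lexicographic sum `α ⊕ₗ β` of CLOs. -/
def sumColor2 {ι α β : Type} (ca : ι → Set α) (cb : ι → Set β) : ι → Set (α ⊕ₗ β) :=
  fun k => {x | Sum.elim (· ∈ ca k) (· ∈ cb k) (ofLex x)}

/-- The set defined by a parameter-free formula in one variable in a CLO. -/
def FmlSet (ι : Type) (M : Type) [LinearOrder M] (c : ι → Set M)
    (φ : (CLOLang ι).Formula Unit) : Set M :=
  {x | Sat M c φ fun _ => x}

/-- A CLO is self-additive if it has more than one point and its only
convex parameter-free-definable subsets are `∅` and the whole order. -/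
def SelfAdditive (ι : Type) (M : Type) [LinearOrder M] (c : ι → Set M) : Prop :=
  Nontrivial M ∧
    ∀ φ : (CLOLang ι).Formula Unit, (FmlSet ι M c φ).OrdConnected →
      FmlSet ι M c φ = ∅ ∨ FmlSet ι M c φ = Set.univ

/-- `a ∼ b`: some set definable with parameter `a` is convex, bounded above and
below, and contains both `a` and `b`. -/
def SimRel (ι : Type) {M : Type} [LinearOrder M] (c : ι → Set M) (a b : M) : Prop :=
  ∃ φ : (CLOLang ι).Formula (Unit ⊕ Unit),
    (Set.OrdConnected {x | Sat M c φ (Sum.elim (fun _ => x) fun _ => a)}) ∧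
    (∃ u : M, ∀ z ∈ {x | Sat M c φ (Sum.elim (fun _ => x) fun _ => a)}, z < u) ∧
    (∃ l : M, ∀ z ∈ {x | Sat M c φ (Sum.elim (fun _ => x) fun _ => a)}, l < z) ∧
    a ∈ {x | Sat M c φ (Sum.elim (fun _ => x) fun _ => a)} ∧
    b ∈ {x | Sat M c φ (Sum.elim (fun _ => x) fun _ => a)}

/-- `f : M → N` is an elementary map of CLOs. -/
def IsElemMap (ι : Type) {M N : Type} [LinearOrder M] [LinearOrder N]
    (cM : ι → Set M) (cN : ι → Set N) (f : M → N) : Prop :=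
  ∀ (k : ℕ) (φ : (CLOLang ι).Formula (Fin k)) (v : Fin k → M),
    Sat M cM φ v ↔ Sat N cN φ (f ∘ v)

/-- A subset of a CLO, with its induced structure, is an elementary substructure. -/
def IsElemSubset (ι : Type) (B : Type) [LinearOrder B] (cB : ι → Set B) (s : Set B) : Prop :=
  IsElemMap ι (subColor cB s) cB (Subtype.val : s → B)

/-- A complete `L_κ`-theory is ℵ₀-categorical: any two at-most-countable CLO
models of it are isomorphic.  (Finite and empty models are allowed.) -/
def Aleph0CatTheory (ι : Type) (T : (CLOLang ι).Theory) : Prop :=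
  ∀ (N₁ N₂ : Type) (i₁ : LinearOrder N₁) (i₂ : LinearOrder N₂)
    (c₁ : ι → Set N₁) (c₂ : ι → Set N₂),
    Countable N₁ → Countable N₂ →
    (letI := i₁; CLOTheory ι N₁ c₁) = T → (letI := i₂; CLOTheory ι N₂ c₂) = T →
    (letI := i₁; letI := i₂; CLOIso ι N₁ c₁ N₂ c₂)

/-- `φ` is a convex formula for the complete theory of the CLO `(M₀, c₀)`:
its realizations in every model of that theory form a convex set. -/
def ConvexFml (ι : Type) (M₀ : Type) [LinearOrder M₀] (c₀ : ι → Set M₀)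
    (φ : (CLOLang ι).Formula Unit) : Prop :=
  ∀ (B : Type) (iB : LinearOrder B) (cB : ι → Set B),
    (letI := iB; CLOEquiv ι B cB M₀ c₀) → (letI := iB; Set.OrdConnected (FmlSet ι B cB φ))

/-- The set of common realizations of a set of one-variable formulas in a CLO. -/
def TypeSet (ι : Type) (M : Type) [LinearOrder M] (c : ι → Set M)
    (Φ : Set ((CLOLang ι).Formula Unit)) : Set M :=
  {x | ∀ φ ∈ Φ, Sat M c φ fun _ => x}

/-- A set of one-variable formulas is consistent with the complete theory of
`(M₀, c₀)`: it is realized in some model of that theory. -/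
def TypeConsistent (ι : Type) (M₀ : Type) [LinearOrder M₀] (c₀ : ι → Set M₀)
    (Φ : Set ((CLOLang ι).Formula Unit)) : Prop :=
  ∃ (B : Type) (iB : LinearOrder B) (cB : ι → Set B),
    (letI := iB; CLOEquiv ι B cB M₀ c₀) ∧ (letI := iB; ∃ b : B, b ∈ TypeSet ι B cB Φ)

/-- `Φ` is a convex type of the complete theory of `(M₀, c₀)`: a maximal
consistent set of convex formulas over `∅`.  `IT(T)` is the set of all such. -/
def IsConvexType (ι : Type) (M₀ : Type) [LinearOrder M₀] (c₀ : ι → Set M₀)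
    (Φ : Set ((CLOLang ι).Formula Unit)) : Prop :=
  (∀ φ ∈ Φ, ConvexFml ι M₀ c₀ φ) ∧ TypeConsistent ι M₀ c₀ Φ ∧
    ∀ ψ, ConvexFml ι M₀ c₀ ψ → TypeConsistent ι M₀ c₀ (insert ψ Φ) → ψ ∈ Φ

/-- A convex type is isolated if it contains a convex formula contained in no
other convex type. -/
def IsolatedCT (ι : Type) (M₀ : Type) [LinearOrder M₀] (c₀ : ι → Set M₀)
    (Φ : Set ((CLOLang ι).Formula Unit)) : Prop :=
  ∃ φ ∈ Φ, ConvexFml ι M₀ c₀ φ ∧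
    ∀ Ψ, IsConvexType ι M₀ c₀ Ψ → φ ∈ Ψ → Ψ = Φ

/-- A CLO is ℵ₀-saturated: every finitely-satisfiable set of formulas in one
variable over finitely many parameters is realized. -/
def Aleph0Saturated (ι : Type) (S : Type) [LinearOrder S] (cS : ι → Set S) : Prop :=
  ∀ (m : ℕ) (a : Fin m → S) (p : Set ((CLOLang ι).Formula (Unit ⊕ Fin m))),
    (∀ q : Finset ((CLOLang ι).Formula (Unit ⊕ Fin m)), ↑q ⊆ p →
      ∃ x : S, ∀ φ ∈ q, Sat S cS φ (Sum.elim (fun _ => x) a)) →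
    ∃ x : S, ∀ φ ∈ p, Sat S cS φ (Sum.elim (fun _ => x) a)

/-- A CLO is strongly ℵ₀-homogeneous: finite tuples with the same complete type
are conjugate under an automorphism. -/
def StronglyAleph0Homogeneous (ι : Type) (S : Type) [LinearOrder S] (cS : ι → Set S) : Prop :=
  ∀ (m : ℕ) (a b : Fin m → S),
    (∀ φ : (CLOLang ι).Formula (Fin m), Sat S cS φ a ↔ Sat S cS φ b) →
    ∃ g : S ≃ S, (∀ x y : S, x < y ↔ g x < g y) ∧
      (∀ (k : ι) (x : S), x ∈ cS k ↔ g x ∈ cS k) ∧ ∀ i, g (a i) = b i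

/-- Sufficiently saturated: ℵ₀-saturated and strongly ℵ₀-homogeneous. -/
def SuffSaturated (ι : Type) (S : Type) [LinearOrder S] (cS : ι → Set S) : Prop :=
  Aleph0Saturated ι S cS ∧ StronglyAleph0Homogeneous ι S cS

/-- The complete theory of `(M₀, c₀)` is locally simple: for every sufficiently
saturated model `S` and every convex type `Φ`, the theory `T_Φ = Th(Φ(S))` is
ℵ₀-categorical. -/
def LocallySimple (ι : Type) (M₀ : Type) [LinearOrder M₀] (c₀ : ι → Set M₀) : Prop :=
  ∀ (S : Type) [LinearOrder S], ∀ (cS : ι → Set S),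
    CLOEquiv ι S cS M₀ c₀ → SuffSaturated ι S cS →
    ∀ Φ, IsConvexType ι M₀ c₀ Φ →
      Aleph0CatTheory ι
        (CLOTheory ι (TypeSet ι S cS Φ) (subColor cS (TypeSet ι S cS Φ)))

/-- A finite set of pairs is a partial isomorphism of CLOs: it preserves `<`,
equality, and each color, in both directions. -/
def IsPartialIso (ι : Type) {M N : Type} [LinearOrder M] [LinearOrder N]
    (cM : ι → Set M) (cN : ι → Set N) (f : Finset (M × N)) : Prop :=
  ∀ p ∈ f, ∀ q ∈ f,
    (p.1 < q.1 ↔ p.2 < q.2) ∧ (p.1 = q.1 ↔ p.2 = q.2) ∧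
    ∀ k, p.1 ∈ cM k ↔ p.2 ∈ cN k

/-- Back-and-forth equivalence of CLOs: a nonempty family of finite partial
isomorphisms with the back-and-forth extension properties. -/
def BackForthEquiv (ι : Type) (M : Type) [LinearOrder M] (cM : ι → Set M)
    (N : Type) [LinearOrder N] (cN : ι → Set N) : Prop :=
  ∃ F : Set (Finset (M × N)), F.Nonempty ∧ (∀ f ∈ F, IsPartialIso ι cM cN f) ∧
    (∀ f ∈ F, ∀ m : M, ∃ g ∈ F, f ⊆ g ∧ ∃ n : N, (m, n) ∈ g) ∧
    (∀ f ∈ F, ∀ n : N, ∃ g ∈ F, f ⊆ g ∧ ∃ m : M, (m, n) ∈ g)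

/-- The set of complete theories `Th(Φ(A))` as `A` ranges over models of the
complete theory of `(M₀, c₀)` (including the theory of the empty structure,
in case `Φ` is omitted). -/
def TheoriesAt (ι : Type) (M₀ : Type) [LinearOrder M₀] (c₀ : ι → Set M₀)
    (Φ : Set ((CLOLang ι).Formula Unit)) : Set ((CLOLang ι).Theory) :=
  {T | ∃ (A : Type) (iA : LinearOrder A) (cA : ι → Set A),
    (letI := iA; CLOEquiv ι A cA M₀ c₀) ∧
    T = (letI := iA; CLOTheory ι (TypeSet ι A cA Φ) (subColor cA (TypeSet ι A cA Φ)))}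

/-!
Let `S` be a sufficiently saturated model. For a convex type `Φ`, the theory of `Φ(S)` is
ℵ₀-categorical, so by the Ryll-Nardzewski theorem the intervals with endpoints in `Φ(S)` realize
only finitely many types of each quantifier rank, with a bound independent of the rank; hence for
some `k` the rank `k` type of such an interval determines its types of all ranks. By saturation the
intervals with endpoints in some convex formula `ψ ∈ Φ` realize no further rank `k` types, so they
too have finitely many types. By saturation again, finitely many of these convex formulas cover `S`.
As the type of an ordered sum is determined by the types of the summands, the intervals of `S`
have finitely many types altogether, and there is `K` such that the rank `K` type of an interval
determines its rank `K + 1` type. Since the language is finite, this is a first-order property of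
`S`, so it holds in, and between, all models of the theory. Thus in two countable models, finite
matchings whose corresponding gaps have the same rank `K` types form a back-and-forth system.
-/

/-! ### Saturated and homogeneous models -/

section TypesOverStructures

universe u v w w'

variable {L : FirstOrder.Language.{u, v}}

theorem realize_congr_of_eqOn_freeVarFinset {M α : Type*} [L.Structure M] [DecidableEq α]
    (φ : L.Formula α) {v w : α → M} (h : EqOn v w φ.freeVarFinset) :
    φ.Realize v ↔ φ.Realize w := by
  have hrestrict : (BoundedFormula.restrictFreeVar φ Subtype.val).Realize v default ↔
      φ.Realize v := BoundedFormula.realize_restrictFreeVar _ fun _ => rfl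
  exact hrestrict.symm.trans (BoundedFormula.realize_restrictFreeVar _ fun a => h a.2)

theorem exists_formula_realize_iff_exists {X Y : Type*} (φ : L.Formula (Y ⊕ X)) :
    ∃ ψ : L.Formula X, ∀ (N : Type w') [L.Structure N] [Nonempty N] (u : X → N),
      ψ.Realize u ↔ ∃ w : Y → N, φ.Realize (Sum.elim w u) := by
  classical
  let Z := {y : Y // Sum.inl y ∈ φ.freeVarFinset}
  have : Finite Z := Finite.of_injective
    (fun z : Z => (⟨Sum.inl z.1, z.2⟩ : φ.freeVarFinset))
    fun _ _ h => Subtype.ext (by simpa using h)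
  let f : φ.freeVarFinset → X ⊕ Z
    | ⟨Sum.inl y, h⟩ => Sum.inr ⟨y, h⟩
    | ⟨Sum.inr x, _⟩ => Sum.inl x
  refine ⟨Formula.iExs Z (BoundedFormula.restrictFreeVar φ f), fun N _ _ u => ?_⟩
  rw [Formula.realize_iExs]
  constructor
  · rintro ⟨w, hw⟩
    refine ⟨fun y => if h : Sum.inl y ∈ φ.freeVarFinset then w ⟨y, h⟩ else Classical.arbitrary N,
      (BoundedFormula.realize_restrictFreeVar _ ?_).1 hw⟩
    rintro ⟨y | x, h⟩ <;> simp [f, h]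
  · rintro ⟨w, hw⟩
    refine ⟨fun z => w z.1, (BoundedFormula.realize_restrictFreeVar _ ?_).2 hw⟩
    rintro ⟨y | x, _⟩ <;> simp [f]

variable {M : Type w} {N : Type w'} [L.Structure M] [L.Structure N]

/-- A set of formulas in variables `β` and parameters `a : α → M` each finite part of which is
realized in `M`. -/
def FinitelyRealizable {α β : Type*} (Γ : Set (L.Formula (β ⊕ α))) (a : α → M) : Prop :=
  ∀ q : Finset (L.Formula (β ⊕ α)), ↑q ⊆ Γ →
    ∃ v : β → M, ∀ φ ∈ q, φ.Realize (Sum.elim v a)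

theorem FinitelyRealizable.of_comp {N : Type w} [L.Structure N] [Nonempty M] {α β : Type*}
    {Γ : Set (L.Formula (β ⊕ α))} {a : α → M} (E : M ↪ₑ[L] N)
    (h : FinitelyRealizable Γ (E ∘ a)) : FinitelyRealizable Γ a := by
  intro q hq
  have : Nonempty N := ‹Nonempty M›.map E
  obtain ⟨v, hv⟩ := h q hq
  obtain ⟨χ, hχ⟩ := exists_formula_realize_iff_exists (Formula.iInf fun φ : q => φ.1)
  have hχN : χ.Realize (E ∘ a) := (hχ N _).2 ⟨v, Formula.realize_iInf.2 fun φ => hv φ φ.2⟩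
  obtain ⟨w, hw⟩ := (hχ M a).1 ((E.map_formula χ a).1 hχN)
  exact ⟨w, fun φ hφ => Formula.realize_iInf.1 hw ⟨φ, hφ⟩⟩

/-- The elementary embedding given by a map that realizes the complete type of the identity, with
the elements of `M` serving as variables. -/
def elementaryEmbeddingOfRealize (f : M → N)
    (hf : ∀ φ : L.Formula M, φ.Realize id → φ.Realize f) : M ↪ₑ[L] N where
  toFun := f
  map_formula' n φ x := by
    have himp (ψ : L.Formula (Fin n)) (hψ : ψ.Realize x) : ψ.Realize (f ∘ x) :=
      Formula.realize_relabel.1 (hf (ψ.relabel x) (Formula.realize_relabel.2 hψ))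
    refine ⟨fun h => ?_, himp φ⟩
    by_contra hn
    exact himp φ.not hn h

/-- An elementary embedding `E : M ↪ₑ[L] N` such that every set of formulas in variables `β` and
parameters from `M` which is finitely realizable in `M` is realized in `N`. -/
def RealizesTypesOver (β : Type*) (E : M ↪ₑ[L] N) : Prop :=
  ∀ Γ : Set (L.Formula (β ⊕ M)), FinitelyRealizable Γ id →
    ∃ v : β → N, ∀ φ ∈ Γ, φ.Realize (Sum.elim v E)

theorem RealizesTypesOver.exists_realize {α β γ : Type*} [Nonempty M] {E : M ↪ₑ[L] N}
    (hE : RealizesTypesOver β E) {i : γ → β} (hi : i.Injective) {a : α → M}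
    {Γ : Set (L.Formula (γ ⊕ α))} (hΓ : FinitelyRealizable Γ a) :
    ∃ v : γ → N, ∀ φ ∈ Γ, φ.Realize (Sum.elim v (E ∘ a)) := by
  classical
  obtain ⟨v, hv⟩ := hE (Formula.relabel (Sum.map i a) '' Γ) (by
    intro q hq
    obtain ⟨q', hq', rfl⟩ := Finset.subset_set_image_iff.1 hq
    obtain ⟨v, hv⟩ := hΓ q' hq'
    refine ⟨Function.extend i v fun _ => Classical.arbitrary M,
      Finset.forall_mem_image.2 fun φ hφ => ?_⟩
    rw [Formula.realize_relabel, Sum.elim_comp_map, Function.extend_comp hi, Function.id_comp]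
    exact hv φ hφ)
  refine ⟨v ∘ i, fun φ hφ => ?_⟩
  simpa [Sum.elim_comp_map] using Formula.realize_relabel.1 (hv _ ⟨φ, hφ, rfl⟩)

theorem RealizesTypesOver.exists_extension [Nonempty M] {E : M ↪ₑ[L] N}
    (hE : RealizesTypesOver M E) {X : Type*} (p q : X → M)
    (hpq : ∀ φ : L.Formula X, φ.Realize p ↔ φ.Realize q) :
    ∃ h : M ↪ₑ[L] N, ∀ x, h (p x) = E (q x) := by
  classical
  have hinj : ∀ x y, p x = p y → q x = q y := fun x y h => by
    simpa using (hpq (Term.equal (Term.var x) (Term.var y))).1 (by simpa using h)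
  -- An element of the range of `p` becomes the parameter it is to be sent to; all other elements
  -- remain variables.
  let r : M → M ⊕ X := fun m => if h : ∃ x, p x = m then Sum.inr h.choose else Sum.inl m
  have hr_id : Sum.elim id p ∘ r = id := funext fun m => by
    by_cases h : ∃ x, p x = m
    · simp [r, h, h.choose_spec]
    · simp [r, h]
  have hr_q (v : M → N) (x : X) : Sum.elim v (E ∘ q) (r (p x)) = E (q x) := by
    have h : ∃ y, p y = p x := ⟨x, rfl⟩
    simp only [r, h, dif_pos, Sum.elim_inr]
    exact congrArg E (hinj _ _ h.choose_spec)
  obtain ⟨v, hv⟩ := hE.exists_realize Function.injective_id (a := q)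
    (Γ := Formula.relabel r '' {ψ | ψ.Realize id}) (by
      intro s hs
      obtain ⟨t, ht, rfl⟩ := Finset.subset_set_image_iff.1 hs
      obtain ⟨χ, hχ⟩ := exists_formula_realize_iff_exists
        ((Formula.iInf fun ψ : t => ψ.1).relabel r)
      have hp : χ.Realize p := (hχ M p).2 ⟨id, Formula.realize_relabel.2 (by
        rw [hr_id, Formula.realize_iInf]
        exact fun ψ => ht ψ.2)⟩
      obtain ⟨v, hv⟩ := (hχ M q).1 ((hpq χ).1 hp)
      rw [Formula.realize_relabel, Formula.realize_iInf] at hv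
      exact ⟨v, Finset.forall_mem_image.2 fun ψ hψ => Formula.realize_relabel.2 (hv ⟨ψ, hψ⟩)⟩)
  exact ⟨elementaryEmbeddingOfRealize _ fun ψ hψ =>
    Formula.realize_relabel.1 (hv _ ⟨ψ, hψ, rfl⟩), fun x => hr_q v x⟩

end TypesOverStructures

section Ultrapowers

universe u

variable {L : FirstOrder.Language.{u, u}}

theorem exists_realizesTypesOver (M β : Type u) [L.Structure M] [Nonempty M] :
    ∃ (N : Type u) (_ : L.Structure N) (E : M ↪ₑ[L] N), RealizesTypesOver β E := by
  classical
  let I := Finset (L.Formula (β ⊕ M))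
  let U : Ultrafilter I := Ultrafilter.of Filter.atTop
  let N := (U : Filter I).Product fun _ => M
  let mk : (I → M) → N := fun x => x
  have los {α : Type u} (φ : L.Formula α) (x : α → I → M) :
      (φ.Realize fun a => mk (x a)) ↔ ∀ᶠ i in U, φ.Realize fun a => x a i :=
    Ultraproduct.realize_formula_cast φ x
  let E : M ↪ₑ[L] N := elementaryEmbeddingOfRealize (fun m => mk fun _ => m)
    fun φ hφ => (los φ _).2 (Filter.Eventually.of_forall fun _ => hφ)
  refine ⟨N, inferInstance, E, fun Γ hΓ => ?_⟩
  choose w hw using fun i : I => hΓ (i.filter (· ∈ Γ)) (by intro φ; simp)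
  refine ⟨fun b => mk fun i => w i b, fun φ hφ => ?_⟩
  have hlim : ∀ᶠ i in U, φ.Realize fun a => Sum.elim (fun b i => w i b) (fun m _ => m) a i := by
    refine Ultrafilter.of_le _ ((Filter.eventually_ge_atTop {φ}).mono fun i hi => ?_)
    have hφi : φ.Realize (Sum.elim (w i) id) :=
      hw i φ (Finset.mem_filter.2 ⟨Finset.singleton_subset_iff.1 hi, hφ⟩)
    convert hφi using 1
    exact funext (Sum.rec (fun _ => rfl) fun _ => rfl)
  convert (los φ _).2 hlim using 1
  exact funext (Sum.rec (fun _ => rfl) fun _ => rfl)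

theorem exists_chain_realizesTypesOver {T : L.Theory} (M : Theory.ModelType.{u, u, u} T) :
    ∃ (G : ℕ → Theory.ModelType.{u, u, u} T) (f : ∀ n, G n ↪ₑ[L] G (n + 1)),
      ∀ n, RealizesTypesOver (G n) (f n) := by
  have hnext (X : Theory.ModelType.{u, u, u} T) :
      ∃ (Y : Theory.ModelType.{u, u, u} T) (E : X ↪ₑ[L] Y), RealizesTypesOver X E := by
    obtain ⟨N, _, E, hE⟩ := exists_realizesTypesOver (L := L) X X
    have : Nonempty N := X.nonempty'.map E
    exact ⟨((E.theory_model_iff T).1 X.is_model).bundled, E, hE⟩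
  choose next E hE using hnext
  exact ⟨fun n => Nat.rec M (fun _ => next) n, fun _ => E _, fun _ => hE _⟩

end Ultrapowers

section ChainUnions

universe u v w

variable {L : FirstOrder.Language.{u, v}} {G : ℕ → Type w} [∀ n, L.Structure (G n)]
  {S : Type w} [L.Structure S]

/-- `S` is the union of the elementary chain `G 0 → G 1 → ⋯` with transition maps `f n`, the
inclusions being the maps `e n`. -/
structure IsChainUnion (f : ∀ n, G n ↪ₑ[L] G (n + 1)) (e : ∀ n, G n ↪[L] S) : Prop where
  map_succ : ∀ n x, e (n + 1) (f n x) = e n x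
  exists_eq : ∀ s, ∃ n x, e n x = s

namespace IsChainUnion

variable {f : ∀ n, G n ↪ₑ[L] G (n + 1)} {e : ∀ n, G n ↪[L] S}

theorem exists_transition (h : IsChainUnion f e) {m n : ℕ} (hmn : m ≤ n) :
    ∃ F : G m ↪ₑ[L] G n, ∀ x, e n (F x) = e m x := by
  induction hmn with
  | refl => exact ⟨ElementaryEmbedding.refl L _, fun _ => rfl⟩
  | step _ ih =>
    obtain ⟨F, hF⟩ := ih
    exact ⟨(f _).comp F, fun x => by simp [h.map_succ, hF]⟩

theorem exists_ge_eq (h : IsChainUnion f e) (m : ℕ) (s : S) : ∃ n ≥ m, ∃ x, e n x = s := by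
  obtain ⟨n, x, rfl⟩ := h.exists_eq s
  obtain ⟨F, hF⟩ := h.exists_transition (le_max_left n m)
  exact ⟨max n m, le_max_right n m, F x, hF x⟩

theorem exists_comp_eq (h : IsChainUnion f e) {α : Type*} [Finite α] (a : α → S) :
    ∃ n, ∃ a' : α → G n, e n ∘ a' = a := by
  choose n x hx using fun i => h.exists_eq (a i)
  obtain ⟨N, hN⟩ := (Set.finite_range n).bddAbove
  choose F hF using fun i => h.exists_transition (hN ⟨i, rfl⟩)
  exact ⟨N, fun i => F i (x i), funext fun i => by simp [hF, hx]⟩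

theorem realize_comp_iff (h : IsChainUnion f e) {α : Type*} {k : ℕ} (φ : L.BoundedFormula α k)
    (n : ℕ) (v : α → G n) (xs : Fin k → G n) :
    φ.Realize (e n ∘ v) (e n ∘ xs) ↔ φ.Realize v xs := by
  induction φ generalizing n with
  | falsum => exact Iff.rfl
  | equal t₁ t₂ => simp [BoundedFormula.Realize, ← Sum.comp_elim, HomClass.realize_term]
  | rel R ts =>
    simp only [BoundedFormula.Realize, ← Sum.comp_elim, HomClass.realize_term]
    exact (e n).map_rel R _
  | imp _ _ ih₁ ih₂ => simp only [BoundedFormula.realize_imp, ih₁, ih₂]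
  | all φ ih =>
    simp only [BoundedFormula.realize_all]
    refine ⟨fun hall a => ?_, fun hall s => ?_⟩
    · rw [← ih, Fin.comp_snoc]
      exact hall (e n a)
    · obtain ⟨m, hm, x, rfl⟩ := h.exists_ge_eq n s
      obtain ⟨F, hF⟩ := h.exists_transition hm
      have hcomp : e m ∘ F = e n := funext hF
      have hallF : φ.all.Realize (F ∘ v) (F ∘ xs) := (F.map_boundedFormula φ.all v xs).2 hall
      have hS := (ih m (F ∘ v) (Fin.snoc (F ∘ xs) x)).2 (hallF x)
      rwa [Fin.comp_snoc, ← Function.comp_assoc, ← Function.comp_assoc, hcomp] at hS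

/-- The inclusions into the union of an elementary chain, as elementary embeddings
(**Tarski–Vaught**). -/
def elementaryEmbedding (h : IsChainUnion f e) (n : ℕ) : G n ↪ₑ[L] S where
  toFun := e n
  map_formula' _ φ x := by
    simpa [Formula.Realize, Unique.eq_default] using h.realize_comp_iff φ n x default

theorem exists_realize (h : IsChainUnion f e) [∀ n, Nonempty (G n)]
    (hf : ∀ n, RealizesTypesOver (G n) (f n)) {α : Type*} [Finite α] (a : α → S)
    {Γ : Set (L.Formula (Unit ⊕ α))} (hΓ : FinitelyRealizable Γ a) :
    ∃ v : Unit → S, ∀ φ ∈ Γ, φ.Realize (Sum.elim v a) := by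
  obtain ⟨n, a, rfl⟩ := h.exists_comp_eq a
  obtain ⟨v, hv⟩ := (hf n).exists_realize (i := fun _ : Unit => Classical.arbitrary (G n))
    (Function.injective_of_subsingleton _) (hΓ.of_comp (h.elementaryEmbedding n))
  refine ⟨e (n + 1) ∘ v, fun φ hφ => ?_⟩
  have hcomp : e n ∘ a = e (n + 1) ∘ f n ∘ a := funext fun i => (h.map_succ n (a i)).symm
  rw [hcomp, ← Sum.comp_elim]
  exact ((h.elementaryEmbedding (n + 1)).map_formula φ _).2 (hv φ hφ)

theorem add (h : IsChainUnion f e) (m : ℕ) :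
    IsChainUnion (fun n => f (m + n)) (fun n => e (m + n)) where
  map_succ n := h.map_succ (m + n)
  exists_eq s := by
    obtain ⟨n, hn, x, rfl⟩ := h.exists_ge_eq m s
    obtain ⟨k, rfl⟩ := Nat.exists_eq_add_of_le hn
    exact ⟨k, x, rfl⟩

theorem exists_equiv_directLimit (h : IsChainUnion f e) :
    ∃ g : Language.DirectLimit G (DirectedSystem.natLERec fun n => (f n).toEmbedding) ≃[L] S,
      ∀ n x, g (Language.DirectLimit.of L ℕ G _ n x) = e n x := by
  have hcompat : ∀ m n hmn x,
      e n (DirectedSystem.natLERec (fun n => (f n).toEmbedding) m n hmn x) = e m x := by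
    intro m n hmn x
    induction hmn with
    | refl => simp [DirectedSystem.natLERec, Nat.leRecOn_self]
    | step hmn ih =>
      rw [← ih, DirectedSystem.coe_natLERec, DirectedSystem.coe_natLERec]
      beta_reduce
      rw [Nat.leRecOn_succ hmn]
      exact h.map_succ _ _
  let F := Language.DirectLimit.lift L ℕ G _ e hcompat
  have hsurj : Function.Surjective F := fun s => by
    obtain ⟨n, x, rfl⟩ := h.exists_eq s
    exact ⟨Language.DirectLimit.of L ℕ G _ n x, Language.DirectLimit.lift_of e hcompat x⟩
  exact ⟨⟨Equiv.ofBijective F ⟨F.injective, hsurj⟩, F.map_fun', F.map_rel'⟩,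
    fun n x => Language.DirectLimit.lift_of e hcompat x⟩

theorem exists_equiv {S' : Type w} [L.Structure S'] {e' : ∀ n, G n ↪[L] S'}
    (h : IsChainUnion f e) (h' : IsChainUnion f e') :
    ∃ g : S ≃[L] S', ∀ n x, g (e n x) = e' n x := by
  obtain ⟨g, hg⟩ := h.exists_equiv_directLimit
  obtain ⟨g', hg'⟩ := h'.exists_equiv_directLimit
  exact ⟨g'.comp g.symm, fun n x => by
    rw [← hg, Language.Equiv.comp_apply, Language.Equiv.symm_apply_apply, hg']⟩

-- The maps `H k` present `S` a second time as the union of the even-numbered members of the chain.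
theorem exists_equiv_of_zigzag (h : IsChainUnion f e) (H : ∀ n, G n ↪ₑ[L] G (n + 1))
    (hH : ∀ n x, H (n + 1) (H n x) = f (n + 1) (f n x)) :
    ∃ g : S ≃[L] S, ∀ x, g (e 0 x) = e 1 (H 0 x) := by
  let t (k : ℕ) : G (2 * k) ↪ₑ[L] G (2 * k + 2) := (f (2 * k + 1)).comp (f (2 * k))
  have heven : IsChainUnion (G := fun k => G (2 * k)) t fun k => e (2 * k) :=
    { map_succ := fun k x => (h.map_succ (2 * k + 1) _).trans (h.map_succ _ _)
      exists_eq := fun s => by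
        obtain ⟨n, x, rfl⟩ := h.exists_eq s
        obtain ⟨F, hF⟩ := h.exists_transition (show n ≤ 2 * n by lia)
        exact ⟨n, F x, hF x⟩ }
  have hodd : IsChainUnion (G := fun k => G (2 * k)) t
      fun k => (e (2 * k + 1)).comp (H (2 * k)).toEmbedding :=
    { map_succ := fun k x => by
        change e (2 * k + 2 + 1) (H (2 * k + 2) (f (2 * k + 1) (f (2 * k) x))) = _
        rw [← hH (2 * k), hH (2 * k + 1), h.map_succ, h.map_succ]
        rfl
      exists_eq := fun s => by
        obtain ⟨n, x, rfl⟩ := h.exists_eq s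
        obtain ⟨F, hF⟩ := h.exists_transition (show n ≤ 2 * n + 1 by lia)
        refine ⟨n + 1, H (2 * n + 1) (F x), ?_⟩
        change e (2 * n + 2 + 1) (H (2 * n + 2) (H (2 * n + 1) (F x))) = _
        rw [hH, h.map_succ, h.map_succ, hF] }
  obtain ⟨g, hg⟩ := heven.exists_equiv hodd
  exact ⟨g, hg 0⟩

theorem exists_equiv_of_realize_iff [∀ n, Nonempty (G n)] (h : IsChainUnion f e)
    (hf : ∀ n, RealizesTypesOver (G n) (f n)) {α : Type*} [Finite α] (a b : α → S)
    (hab : ∀ φ : L.Formula α, φ.Realize a ↔ φ.Realize b) :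
    ∃ g : S ≃[L] S, ∀ i, g (a i) = b i := by
  obtain ⟨m, ab, hm⟩ := h.exists_comp_eq (Sum.elim a b)
  obtain rfl : e m ∘ ab ∘ Sum.inl = a := by rw [← Function.comp_assoc, hm, Sum.elim_comp_inl]
  obtain rfl : e m ∘ ab ∘ Sum.inr = b := by rw [← Function.comp_assoc, hm, Sum.elim_comp_inr]
  obtain ⟨H₀, hH₀⟩ := (hf m).exists_extension (ab ∘ Sum.inl) (ab ∘ Sum.inr) fun φ =>
    ((h.elementaryEmbedding m).map_formula φ _).symm.trans
      ((hab φ).trans ((h.elementaryEmbedding m).map_formula φ _))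
  have hnext (n : ℕ) (H : G n ↪ₑ[L] G (n + 1)) : ∃ H' : G (n + 1) ↪ₑ[L] G (n + 2),
      ∀ x, H' (H x) = f (n + 1) (f n x) :=
    (hf (n + 1)).exists_extension H (f n) fun φ =>
      (H.map_formula φ id).trans ((f n).map_formula φ id).symm
  choose next hnext using hnext
  let H (k : ℕ) : G (m + k) ↪ₑ[L] G (m + k + 1) :=
    Nat.rec (motive := fun k => G (m + k) ↪ₑ[L] G (m + k + 1)) H₀ (fun k => next (m + k)) k
  obtain ⟨g, hg⟩ := (h.add m).exists_equiv_of_zigzag H fun k => hnext (m + k) (H k)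
  exact ⟨g, fun i => (hg _).trans ((congrArg (e (m + 1)) (hH₀ i)).trans (h.map_succ m _))⟩

end IsChainUnion

theorem isChainUnion_directLimit (f : ∀ n, G n ↪ₑ[L] G (n + 1)) :
    IsChainUnion f
      (Language.DirectLimit.of L ℕ G (DirectedSystem.natLERec fun n => (f n).toEmbedding)) where
  map_succ n x := by
    rw [← Language.DirectLimit.of_f (f := DirectedSystem.natLERec fun n => (f n).toEmbedding)
      (hij := n.le_succ), DirectedSystem.coe_natLERec]
    beta_reduce
    rw [Nat.leRecOn_succ']
    rfl
  exists_eq := Language.DirectLimit.exists_of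

end ChainUnions

universe u in
theorem exists_saturated_homogeneous {L : FirstOrder.Language.{u, u}} (M : Type u)
    [L.Structure M] [Nonempty M] :
    ∃ (S : Type u) (_ : L.Structure S), (S ≅[L] M) ∧
      (∀ (m : ℕ) (a : Fin m → S) (Γ : Set (L.Formula (Unit ⊕ Fin m))),
        FinitelyRealizable Γ a → ∃ v : Unit → S, ∀ φ ∈ Γ, φ.Realize (Sum.elim v a)) ∧
      (∀ (m : ℕ) (a b : Fin m → S), (∀ φ : L.Formula (Fin m), φ.Realize a ↔ φ.Realize b) →
        ∃ g : S ≃[L] S, ∀ i, g (a i) = b i) := by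
  obtain ⟨G, f, hf⟩ := exists_chain_realizesTypesOver (Theory.ModelType.of (L.completeTheory M) M)
  have hS := isChainUnion_directLimit f
  refine ⟨_, inferInstance, (hS.elementaryEmbedding 0).elementarilyEquivalent.symm.trans
    (elementarilyEquivalent_iff.2 (realize_iff_of_model_completeTheory M _)),
    fun m a Γ hΓ => hS.exists_realize hf a hΓ,
    fun m a b hab => hS.exists_equiv_of_realize_iff hf a b hab⟩

/-! ### Omitting types -/

section OmittingTypes

variable {L : FirstOrder.Language.{0, 0}}

theorem exists_elementarilyEquivalent_realize {M : Type} [L.Structure M] [Nonempty M] {β : Type}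
    {Γ : Set (L.Formula β)}
    (hΓ : ∀ q : Finset (L.Formula β), ↑q ⊆ Γ → ∃ v : β → M, ∀ φ ∈ q, φ.Realize v) :
    ∃ (N : Type) (_ : L.Structure N), (N ≅[L] M) ∧ ∃ v : β → N, ∀ φ ∈ Γ, φ.Realize v := by
  classical
  obtain ⟨N, _, E, hE⟩ := exists_realizesTypesOver (L := L) M β
  obtain ⟨v, hv⟩ := hE.exists_realize Function.injective_id (a := (isEmptyElim : Empty → M))
    (Γ := Formula.relabel Sum.inl '' Γ) (by
      intro s hs
      obtain ⟨q, hq, rfl⟩ := Finset.subset_set_image_iff.1 hs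
      obtain ⟨v, hv⟩ := hΓ q hq
      refine ⟨v, Finset.forall_mem_image.2 fun φ hφ => ?_⟩
      rw [Formula.realize_relabel, Sum.elim_comp_inl]
      exact hv φ hφ)
  refine ⟨N, inferInstance, E.elementarilyEquivalent.symm, v, fun φ hφ => ?_⟩
  simpa using Formula.realize_relabel.1 (hv _ ⟨φ, hφ, rfl⟩)

/-- The forcing conditions for building a model from a sequence: the formulas satisfiable in `C`. -/
def SatisfiableFormula (L : FirstOrder.Language.{0, 0}) (C : Type) [L.Structure C] : Type :=
  {φ : L.Formula ℕ // ∃ v : ℕ → C, φ.Realize v}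

instance (C : Type) [L.Structure C] : Preorder (SatisfiableFormula L C) where
  le φ ψ := ∀ v : ℕ → C, ψ.1.Realize v → φ.1.Realize v
  le_refl _ _ := id
  le_trans _ _ _ h₁ h₂ v h := h₁ v (h₂ v h)

variable {C : Type} [L.Structure C]

theorem exists_generic_sequence [Nonempty C] {J : Type} [Countable J] {D : J → Set (L.Formula ℕ)}
    (hD : ∀ j (φ : L.Formula ℕ), (∃ v : ℕ → C, φ.Realize v) →
      ∃ ψ ∈ D j, ∃ v : ℕ → C, φ.Realize v ∧ ψ.Realize v) :
    ∃ (N : Type) (_ : L.Structure N), (N ≅[L] C) ∧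
      ∃ a : ℕ → N, ∀ j, ∃ ψ ∈ D j, ψ.Realize a := by
  let _ : Encodable J := Encodable.ofCountable _
  let E (j : J) : Order.Cofinal (SatisfiableFormula L C) :=
    { carrier := {φ | ∃ ψ ∈ D j, ∀ v : ℕ → C, φ.1.Realize v → ψ.Realize v}
      isCofinal := fun φ => by
        obtain ⟨ψ, hψ, v, hv⟩ := hD j φ.1 φ.2
        exact ⟨⟨φ.1 ⊓ ψ, v, Formula.realize_inf.2 hv⟩,
          ⟨ψ, hψ, fun v hv => (Formula.realize_inf.1 hv).2⟩,
          fun v hv => (Formula.realize_inf.1 hv).1⟩ }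
  let q := Order.sequenceOfCofinals (⟨⊤, fun _ => Classical.arbitrary C, by simp⟩) E
  have hq : Monotone q := Order.sequenceOfCofinals.monotone _ E
  obtain ⟨N, _, hN, a, ha⟩ := exists_elementarilyEquivalent_realize (M := C)
    (Γ := {φ : L.Formula ℕ | ∃ k, ∀ v : ℕ → C, (q k).1.Realize v → φ.Realize v}) (by
      intro t ht
      choose! k hk using ht
      obtain ⟨v, hv⟩ := (q (t.sup k)).2
      exact ⟨v, fun φ hφ => hk hφ v (hq (Finset.le_sup hφ) v hv)⟩)
  refine ⟨N, inferInstance, hN, a, fun j => ?_⟩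
  obtain ⟨ψ, hψ, hq⟩ := Order.sequenceOfCofinals.encode_mem _ E j
  exact ⟨ψ, hψ, ha ψ ⟨_, hq⟩⟩

/-- The formula `(∃ y, φ(y, x)) → φ(x j, x)` in the variables `x`, saying that `x j` is a Henkin
witness for `φ`. -/
noncomputable def henkinFormula (φ : L.Formula (Unit ⊕ ℕ)) (j : ℕ) : L.Formula ℕ :=
  (exists_formula_realize_iff_exists.{0, 0, 0} φ).choose.imp (φ.relabel (Sum.elim (fun _ => j) id))

theorem realize_henkinFormula {N : Type} [L.Structure N] [Nonempty N] {φ : L.Formula (Unit ⊕ ℕ)}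
    {j : ℕ} {a : ℕ → N} :
    (henkinFormula φ j).Realize a ↔
      ((∃ y : Unit → N, φ.Realize (Sum.elim y a)) → φ.Realize (Sum.elim (fun _ => a j) a)) := by
  rw [henkinFormula, Formula.realize_imp,
    (exists_formula_realize_iff_exists.{0, 0, 0} φ).choose_spec,
    Formula.realize_relabel, Sum.comp_elim]
  rfl

theorem exists_realize_and_henkinFormula {φ : L.Formula ℕ} (hφ : ∃ v : ℕ → C, φ.Realize v)
    (ψ : L.Formula (Unit ⊕ ℕ)) :
    ∃ j, ∃ v : ℕ → C, φ.Realize v ∧ (henkinFormula ψ j).Realize v := by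
  classical
  obtain ⟨v, hv⟩ := hφ
  have : Nonempty C := ⟨v 0⟩
  obtain ⟨j, hj⟩ := Infinite.exists_notMem_finset (φ.freeVarFinset ∪
    ψ.freeVarFinset.preimage Sum.inr Sum.inr_injective.injOn)
  simp only [Finset.mem_union, Finset.mem_preimage, not_or] at hj
  by_cases hex : ∃ y : Unit → C, ψ.Realize (Sum.elim y v)
  · obtain ⟨y, hy⟩ := hex
    have hupdate (i : ℕ) (hi : i ≠ j) : v i = Function.update v j (y ()) i :=
      (Function.update_of_ne hi _ v).symm
    refine ⟨j, Function.update v j (y ()), (realize_congr_of_eqOn_freeVarFinset φ fun i hi =>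
      hupdate i ?_).1 hv, realize_henkinFormula.2 fun _ =>
        (realize_congr_of_eqOn_freeVarFinset ψ ?_).1 hy⟩
    · rintro rfl
      exact hj.1 hi
    · rintro (_ | i) hi
      · simp
      · refine hupdate i ?_
        rintro rfl
        exact hj.2 hi
  · exact ⟨j, v, hv, realize_henkinFormula.2 fun h => absurd h hex⟩

theorem exists_elementarySubstructure_eq_range {N I : Type*} [L.Structure N] {a : I → N}
    (ha : ∀ φ : L.Formula (Unit ⊕ I), (∃ y : Unit → N, φ.Realize (Sum.elim y a)) →
      ∃ i, φ.Realize (Sum.elim (fun _ => a i) a)) :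
    ∃ N' : L.ElementarySubstructure N, (N' : Set N) = range a := by
  let N' : L.Substructure N :=
    { carrier := range a
      fun_mem := fun {n} f x hx => by
        choose i hi using hx
        obtain rfl : a ∘ i = x := funext hi
        obtain ⟨j, hj⟩ := ha (Term.equal (Term.var (Sum.inl ()))
          (Term.func f fun k => Term.var (Sum.inr (i k)))) ⟨fun _ => Structure.funMap f (a ∘ i), by
            simp [Formula.realize_equal, Function.comp_def]⟩
        exact ⟨j, by simpa [Formula.realize_equal, Function.comp_def] using hj⟩ }
  refine ⟨⟨N', N'.isElementary_of_exists fun m φ x y hy => ?_⟩, rfl⟩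
  choose i hi using fun k => (x k).2
  let r : Empty ⊕ Fin (m + 1) → Unit ⊕ I :=
    Sum.elim isEmptyElim (Fin.snoc (Sum.inr ∘ i) (Sum.inl ()))
  have hr (z : N) : (φ.toFormula.relabel r).Realize (Sum.elim (fun _ => z) a) ↔
      φ.Realize default (Fin.snoc ((↑) ∘ x) z : Fin (m + 1) → N) := by
    rw [Formula.realize_relabel, BoundedFormula.realize_toFormula]
    have hz : (Sum.elim (fun _ => z) a ∘ r) ∘ Sum.inr = Fin.snoc ((↑) ∘ x) z :=
      funext (Fin.lastCases (by simp [r]) fun k => by simp [r, hi])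
    rw [hz, Unique.eq_default ((Sum.elim (fun _ => z) a ∘ r) ∘ Sum.inl)]
  obtain ⟨j, hj⟩ := ha (φ.toFormula.relabel r) ⟨fun _ => y, (hr y).2 hy⟩
  exact ⟨⟨a j, j, rfl⟩, (hr (a j)).1 hj⟩

theorem exists_realize_and_not_realize_relabel {α : Type} [Finite α] [Nonempty C]
    {p : Set (L.Formula α)}
    (hp : ∀ χ : L.Formula α, (∃ v : α → C, χ.Realize v) →
      ∃ θ ∈ p, ∃ v : α → C, χ.Realize v ∧ ¬ θ.Realize v)
    {φ : L.Formula ℕ} (hφ : ∃ v : ℕ → C, φ.Realize v) (s : α → ℕ) :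
    ∃ θ ∈ p, ∃ v : ℕ → C, φ.Realize v ∧ ¬ θ.Realize (v ∘ s) := by
  obtain ⟨χ, hχ⟩ := exists_formula_realize_iff_exists ((φ.relabel Sum.inl : L.Formula (ℕ ⊕ α)) ⊓
    Formula.iInf fun k => Term.equal (Term.var (Sum.inr k)) (Term.var (Sum.inl (s k))))
  simp only [Formula.realize_inf, Formula.realize_relabel, Formula.realize_iInf,
    Formula.realize_equal, Term.realize_var, Sum.elim_comp_inl, Sum.elim_inl, Sum.elim_inr] at hχ
  obtain ⟨v, hv⟩ := hφ
  obtain ⟨θ, hθ, u, hu, hθu⟩ := hp χ ⟨v ∘ s, (hχ _ _).2 ⟨v, hv, fun _ => rfl⟩⟩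
  obtain ⟨w, hw, huw⟩ := (hχ _ _).1 hu
  obtain rfl : u = w ∘ s := funext huw
  exact ⟨θ, hθ, w, hw, hθu⟩

theorem exists_countable_omitting [Countable L.Symbols] [Nonempty C] {α : Type} [Finite α]
    {p : Set (L.Formula α)}
    (hp : ∀ χ : L.Formula α, (∃ v : α → C, χ.Realize v) →
      ∃ θ ∈ p, ∃ v : α → C, χ.Realize v ∧ ¬ θ.Realize v) :
    ∃ (N : Type) (_ : L.Structure N), Countable N ∧ (N ≅[L] C) ∧
      ∀ w : α → N, ∃ θ ∈ p, ¬ θ.Realize w := by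
  obtain ⟨N, _, hNC, a, ha⟩ := exists_generic_sequence (C := C)
    (D := Sum.elim (fun s : α → ℕ => {ψ | ∃ θ ∈ p, ψ = (θ.relabel s).not})
      (fun φ : L.Formula (Unit ⊕ ℕ) => range (henkinFormula φ))) (by
      rintro (s | ψ) φ hφ
      · obtain ⟨θ, hθ, v, hv, hθv⟩ := exists_realize_and_not_realize_relabel hp hφ s
        exact ⟨_, ⟨θ, hθ, rfl⟩, v, hv, by rwa [Formula.realize_not, Formula.realize_relabel]⟩
      · obtain ⟨j, hj⟩ := exists_realize_and_henkinFormula hφ ψ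
        exact ⟨_, ⟨j, rfl⟩, hj⟩)
  have : Nonempty N := ⟨a 0⟩
  obtain ⟨N', hN'⟩ := exists_elementarySubstructure_eq_range (a := a) fun φ hφ => by
    obtain ⟨_, ⟨j, rfl⟩, hj⟩ := ha (Sum.inr φ)
    exact ⟨j, realize_henkinFormula.1 hj hφ⟩
  refine ⟨N', inferInstance, ?_, N'.elementarilyEquivalent.trans hNC, fun w => ?_⟩
  · exact (hN' ▸ countable_range a : (N' : Set N).Countable).to_subtype
  · choose s hs using fun i => hN'.subset (w i).2
    obtain ⟨_, ⟨θ, hθ, rfl⟩, h⟩ := ha (Sum.inl s)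
    refine ⟨θ, hθ, fun hw => ?_⟩
    rw [Formula.realize_not, Formula.realize_relabel, show a ∘ s = N'.subtype ∘ w from funext hs]
      at h
    exact h ((N'.subtype.map_formula θ w).2 hw)

/-- The formula `χ` is complete modulo the theory of `C`: it decides every formula in the same
variables. -/
def IsCompleteFormula (C : Type) [L.Structure C] {α : Type} (χ : L.Formula α) : Prop :=
  ∀ θ : L.Formula α,
    (∀ v : α → C, χ.Realize v → θ.Realize v) ∨ ∀ v : α → C, χ.Realize v → ¬ θ.Realize v

theorem exists_not_realize_isCompleteFormula [Nonempty C] {α : Type}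
    (hinf : (range fun v : α → C => {φ : L.Formula α | φ.Realize v}).Infinite) :
    ∃ (N : Type) (_ : L.Structure N), (N ≅[L] C) ∧
      ∃ w : α → N, ∀ χ : L.Formula α, IsCompleteFormula C χ → ¬ χ.Realize w := by
  classical
  obtain ⟨N, _, hNC, w, hw⟩ := exists_elementarilyEquivalent_realize (M := C)
    (Γ := (fun χ : L.Formula α => (χ.not : L.Formula α)) '' {χ | IsCompleteFormula C χ}) (by
      intro s hs
      obtain ⟨q, hq, rfl⟩ := Finset.subset_set_image_iff.1 hs
      by_contra! hcon
      -- Each type realized in `C` would be generated by one of the finitely many formulas in `q`.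
      refine hinf ((q.finite_toSet.image fun χ =>
        {θ : L.Formula α | ∀ v : α → C, χ.Realize v → θ.Realize v}).subset ?_)
      rintro _ ⟨v, rfl⟩
      obtain ⟨_, hφ, hφv⟩ := hcon v
      obtain ⟨χ, hχ, rfl⟩ := Finset.mem_image.1 hφ
      have hv : χ.Realize v := not_not.1 hφv
      exact ⟨χ, hχ, Set.ext fun θ =>
        ⟨fun h => h v hv, fun h => (hq hχ θ).resolve_right fun h' => h' v hv h⟩⟩)
  exact ⟨N, _, hNC, w, fun χ hχ => hw _ ⟨χ, hχ, rfl⟩⟩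

theorem exists_countable_forall_not_realize_iff [Countable L.Symbols] [Nonempty C] {α N : Type}
    [Finite α] [L.Structure N] {w : α → N}
    (hw : ∀ χ : L.Formula α, IsCompleteFormula C χ → ¬ χ.Realize w) :
    ∃ (N' : Type) (_ : L.Structure N'), Countable N' ∧ (N' ≅[L] C) ∧
      ∀ u : α → N', ∃ θ : L.Formula α, ¬ (θ.Realize w ↔ θ.Realize u) := by
  obtain ⟨N', _, hN', hN'C, homit⟩ := exists_countable_omitting (C := C)
    (p := {θ : L.Formula α | θ.Realize w}) (by
      rintro χ ⟨v, hv⟩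
      by_contra! hcon
      refine hw χ (fun θ => ?_) ?_
      · by_cases hθ : θ.Realize w
        · exact Or.inl (hcon θ hθ)
        · exact Or.inr fun v hv => hcon θ.not hθ v hv
      · by_contra hχ
        exact hcon χ.not hχ v hv hv)
  refine ⟨N', _, hN', hN'C, fun u => ?_⟩
  obtain ⟨θ, hθ, hθu⟩ := homit u
  exact ⟨θ, fun h => hθu (h.1 hθ)⟩

/-- One half of the **Ryll-Nardzewski theorem**. -/
theorem finite_range_type_of_categorical [Countable L.Symbols]
    (hcat : ∀ (N₁ N₂ : Type) [L.Structure N₁] [L.Structure N₂], Countable N₁ → Countable N₂ →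
      (N₁ ≅[L] C) → (N₂ ≅[L] C) → Nonempty (N₁ ≃[L] N₂)) (α : Type) [Finite α] :
    (range fun v : α → C => {φ : L.Formula α | φ.Realize v}).Finite := by
  by_contra hinf
  have : Infinite C := by
    by_contra h
    rw [not_infinite_iff_finite] at h
    exact hinf (finite_range _)
  obtain ⟨N, _, hNC, w, hw⟩ := exists_not_realize_isCompleteFormula hinf
  have : Infinite N := hNC.infinite_iff.2 this
  obtain ⟨N₂, _, hN₂, hN₂C, homit⟩ := exists_countable_forall_not_realize_iff hw
  obtain ⟨N₁, hwN₁, hN₁⟩ := exists_elementarySubstructure_card_eq L (range w)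
    Cardinal.aleph0.{0} le_rfl (by simp [(finite_range w).lt_aleph0.le])
    (by simpa [FirstOrder.Language.card] using Cardinal.mk_le_aleph0 (α := L.Symbols))
    (by simp [Cardinal.infinite_iff.1 this])
  have hN₁c : Countable N₁ := by
    rw [← Cardinal.mk_le_aleph0_iff]
    simpa using hN₁.le
  obtain ⟨g⟩ := hcat N₁ N₂ hN₁c hN₂ (N₁.elementarilyEquivalent.trans hNC) hN₂C
  let u : α → N₁ := fun i => ⟨w i, hwN₁ ⟨i, rfl⟩⟩
  obtain ⟨θ, hθ⟩ := homit (g ∘ u)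
  exact hθ ((N₁.subtype.map_formula θ u).trans (StrongHomClass.realize_formula g θ).symm)

end OmittingTypes

/-! ### Types of bounded quantifier rank -/

section RankedTypes

variable {ι : Type}

/-- The possible types of quantifier rank at most `k` of a colored linear order. A type of rank
`k + 1` records, for each point, its set of colors and the rank `k` types of the two sides. -/
def RankedType (ι : Type) : ℕ → Type
  | 0 => Unit
  | k + 1 => Set (Set ι × RankedType ι k × RankedType ι k)

instance RankedType.instFinite [Finite ι] : ∀ k, Finite (RankedType ι k)
  | 0 => inferInstanceAs (Finite Unit)
  | k + 1 =>
    have := RankedType.instFinite k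
    inferInstanceAs (Finite (Set (Set ι × RankedType ι k × RankedType ι k)))

/-- The rank `k` type determined by a rank `k + 1` type. -/
def RankedType.trunc : ∀ k, RankedType ι (k + 1) → RankedType ι k
  | 0, _ => ()
  | k + 1, σ => (Prod.map id (Prod.map (trunc k) (trunc k))) ''
      (σ : Set (Set ι × RankedType ι (k + 1) × RankedType ι (k + 1)))

/-- The ranked type of an ordered sum, in terms of the ranked types of the summands. -/
def RankedType.add : ∀ k, RankedType ι k → RankedType ι k → RankedType ι k
  | 0, _, _ => ()
  | k + 1, σ, τ =>
    ((Prod.map id (Prod.map id fun ρ => add k ρ (trunc k τ))) ''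
        (σ : Set (Set ι × RankedType ι k × RankedType ι k)) ∪
      (Prod.map id (Prod.map (fun ρ => add k (trunc k σ) ρ) id)) ''
        (τ : Set (Set ι × RankedType ι k × RankedType ι k)) :
      Set (Set ι × RankedType ι k × RankedType ι k))

/-- The set of colors of a point. -/
def colorSet {M : Type} (c : ι → Set M) (x : M) : Set ι := {i | x ∈ c i}

variable {M N : Type} [LinearOrder M] [LinearOrder N] (c : ι → Set M) (d : ι → Set N)

/-- The type of quantifier rank at most `k` of a subset of a colored linear order. -/
def rankedType : ∀ k, Set M → RankedType ι k
  | 0, _ => ()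
  | k + 1, s =>
    ((fun x => (colorSet c x, rankedType k (s ∩ Iio x), rankedType k (s ∩ Ioi x))) '' s :
      Set (Set ι × RankedType ι k × RankedType ι k))

theorem rankedType_succ (k : ℕ) (s : Set M) : rankedType c (k + 1) s =
    ((fun x => (colorSet c x, rankedType c k (s ∩ Iio x), rankedType c k (s ∩ Ioi x))) '' s :
      Set (Set ι × RankedType ι k × RankedType ι k)) := rfl

theorem rankedType_succ_eq_iff (k : ℕ) (s : Set M) (t : Set N) :
    rankedType c (k + 1) s = rankedType d (k + 1) t ↔
      (∀ x ∈ s, ∃ y ∈ t, colorSet c x = colorSet d y ∧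
        rankedType c k (s ∩ Iio x) = rankedType d k (t ∩ Iio y) ∧
        rankedType c k (s ∩ Ioi x) = rankedType d k (t ∩ Ioi y)) ∧
      ∀ y ∈ t, ∃ x ∈ s, colorSet c x = colorSet d y ∧
        rankedType c k (s ∩ Iio x) = rankedType d k (t ∩ Iio y) ∧
        rankedType c k (s ∩ Ioi x) = rankedType d k (t ∩ Ioi y) := by
  rw [rankedType_succ, rankedType_succ]
  refine Subset.antisymm_iff.trans (and_congr ?_ ?_)
  · refine image_subset_iff.trans (forall₂_congr fun x _ => ?_)
    simp only [mem_preimage, mem_image, Prod.mk.injEq, eq_comm]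
  · refine image_subset_iff.trans (forall₂_congr fun x _ => ?_)
    simp only [mem_preimage, mem_image, Prod.mk.injEq]

theorem trunc_rankedType (k : ℕ) (s : Set M) :
    RankedType.trunc k (rankedType c (k + 1) s) = rankedType c k s := by
  induction k generalizing s with
  | zero => rfl
  | succ k ih =>
    rw [rankedType_succ, rankedType_succ]
    refine (image_image _ _ _).trans ?_
    simp only [Prod.map_apply, ih, id]

theorem rankedType_eq_of_le {k l : ℕ} (hkl : k ≤ l) {s : Set M} {t : Set N}
    (h : rankedType c l s = rankedType d l t) : rankedType c k s = rankedType d k t := by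
  induction hkl with
  | refl => exact h
  | step _ ih => exact ih (by rw [← trunc_rankedType, h, trunc_rankedType])

theorem rankedType_union (k : ℕ) {s t : Set M} (hst : ∀ x ∈ s, ∀ y ∈ t, x < y) :
    rankedType c k (s ∪ t) = RankedType.add k (rankedType c k s) (rankedType c k t) := by
  induction k generalizing s t with
  | zero => rfl
  | succ k ih =>
    rw [rankedType_succ, image_union, RankedType.add, trunc_rankedType, trunc_rankedType]
    congr 1
    · refine Eq.trans (image_congr fun x hx => ?_) (image_image _ _ _).symm
      have hIio : t ∩ Iio x = ∅ :=
        eq_empty_of_forall_notMem fun y hy => (hst x hx y hy.1).not_gt hy.2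
      have hIoi : t ∩ Ioi x = t := inter_eq_left.2 (hst x hx)
      simp only [union_inter_distrib_right, hIio, hIoi, union_empty, Prod.map_apply, id,
        ih fun z hz y hy => hst z (inter_subset_left hz) y hy]
    · refine Eq.trans (image_congr fun x hx => ?_) (image_image _ _ _).symm
      have hIio : s ∩ Iio x = s := inter_eq_left.2 fun y hy => hst y hy x hx
      have hIoi : s ∩ Ioi x = ∅ :=
        eq_empty_of_forall_notMem fun y hy => (hst y hy.1 x hx).not_gt hy.2
      simp only [union_inter_distrib_right, hIio, hIoi, empty_union, Prod.map_apply, id,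
        ih fun z hz y hy => hst z hz y (inter_subset_left hy)]

theorem rankedType_image {f : M → N} (hf : StrictMono f)
    (hc : ∀ x, colorSet d (f x) = colorSet c x) (k : ℕ) (s : Set M) :
    rankedType d k (f '' s) = rankedType c k s := by
  induction k generalizing s with
  | zero => rfl
  | succ k ih =>
    have hIio (x : M) : f ⁻¹' Iio (f x) = Iio x := Set.ext fun _ => hf.lt_iff_lt
    have hIoi (x : M) : f ⁻¹' Ioi (f x) = Ioi x := Set.ext fun _ => hf.lt_iff_lt
    simp only [rankedType_succ, image_image, ← image_inter_preimage, hIio, hIoi, ih, hc]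
    rfl

/-- The sequence of all ranked types of a set; in a finite language this amounts to its complete
theory. -/
def fullType (s : Set M) : ∀ k, RankedType ι k := fun k => rankedType c k s

theorem fullType_union {s t : Set M} (hst : ∀ x ∈ s, ∀ y ∈ t, x < y) :
    fullType c (s ∪ t) = fun k => RankedType.add k (fullType c s k) (fullType c t k) :=
  funext fun k => rankedType_union c k hst

theorem fullType_eq_of_rankedType_eq {𝓢 : Set (Set M)}
    (hlo : ∀ s ∈ 𝓢, ∀ x ∈ s, s ∩ Iio x ∈ 𝓢) (hhi : ∀ s ∈ 𝓢, ∀ x ∈ s, s ∩ Ioi x ∈ 𝓢) {K : ℕ}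
    (hK : ∀ s ∈ 𝓢, ∀ t ∈ 𝓢, rankedType c K s = rankedType c K t →
      rankedType c (K + 1) s = rankedType c (K + 1) t)
    {s t : Set M} (hs : s ∈ 𝓢) (ht : t ∈ 𝓢) (h : rankedType c K s = rankedType c K t) :
    fullType c s = fullType c t := by
  suffices key : ∀ j, ∀ s ∈ 𝓢, ∀ t ∈ 𝓢, rankedType c K s = rankedType c K t →
      rankedType c (K + j) s = rankedType c (K + j) t from
    funext fun k => rankedType_eq_of_le c c (Nat.le_add_left k K) (key k s hs t ht h)
  intro j
  induction j with
  | zero => exact fun _ _ _ _ h => h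
  | succ j ih =>
    intro s hs t ht h
    obtain ⟨hforth, hback⟩ := (rankedType_succ_eq_iff c c K s t).1 (hK s hs t ht h)
    refine (rankedType_succ_eq_iff c c (K + j) s t).2 ⟨fun x hx => ?_, fun y hy => ?_⟩
    · obtain ⟨y, hy, hxy, hl, hr⟩ := hforth x hx
      exact ⟨y, hy, hxy, ih _ (hlo s hs x hx) _ (hlo t ht y hy) hl,
        ih _ (hhi s hs x hx) _ (hhi t ht y hy) hr⟩
    · obtain ⟨x, hx, hxy, hl, hr⟩ := hback y hy
      exact ⟨x, hx, hxy, ih _ (hlo s hs x hx) _ (hlo t ht y hy) hl,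
        ih _ (hhi s hs x hx) _ (hhi t ht y hy) hr⟩

theorem exists_rank_of_finite_fullType {𝓢 : Set (Set M)} (h : (fullType c '' 𝓢).Finite) :
    ∃ K, ∀ s ∈ 𝓢, ∀ t ∈ 𝓢, rankedType c K s = rankedType c K t → fullType c s = fullType c t := by
  have hsep (p : (∀ k, RankedType ι k) × (∀ k, RankedType ι k)) :
      ∃ k, p.1 k = p.2 k → p.1 = p.2 := by
    by_contra! hp
    exact (hp 0).2 (funext fun k => (hp k).1)
  choose k hk using hsep
  obtain ⟨K, hK⟩ := ((h.prod h).image k).bddAbove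
  exact ⟨K, fun s hs t ht hst => hk (fullType c s, fullType c t) <| rankedType_eq_of_le c c
    (hK ⟨_, ⟨mem_image_of_mem _ hs, mem_image_of_mem _ ht⟩, rfl⟩) hst⟩

theorem finite_fullType_of_rank [Finite ι] {𝓢 : Set (Set M)} {K : ℕ}
    (h : ∀ s ∈ 𝓢, ∀ t ∈ 𝓢, rankedType c K s = rankedType c K t → fullType c s = fullType c t) :
    (fullType c '' 𝓢).Finite := by
  refine Set.Finite.of_finite_image (f := fun F => F K) (Set.toFinite _) ?_
  rintro _ ⟨s, hs, rfl⟩ _ ⟨t, ht, rfl⟩ hst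
  exact h s hs t ht hst

end RankedTypes

/-! ### Types of intervals -/

section Intervals

variable {ι M : Type} [LinearOrder M]

/-- The open interval from `lo` to `hi`, either of which may be infinite. -/
def extIoo (lo : WithBot M) (hi : WithTop M) : Set M := {z | lo < z ∧ ↑z < hi}

theorem extIoo_bot_top : extIoo (⊥ : WithBot M) ⊤ = univ := by
  ext; simp [extIoo]

theorem extIoo_coe_top (a : M) : extIoo (a : WithBot M) ⊤ = Ioi a := by
  ext; simp [extIoo]

theorem extIoo_bot_coe (b : M) : extIoo ⊥ (b : WithTop M) = Iio b := by
  ext; simp [extIoo]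

theorem extIoo_coe_coe (a b : M) : extIoo (a : WithBot M) (b : WithTop M) = Ioo a b := by
  ext; simp [extIoo]

theorem extIoo_eq_inter (lo : WithBot M) (hi : WithTop M) :
    extIoo lo hi = extIoo lo ⊤ ∩ extIoo ⊥ hi := by
  ext; simp [extIoo]

theorem extIoo_inter_Iio {lo : WithBot M} {hi : WithTop M} {x : M} (hx : x ∈ extIoo lo hi) :
    extIoo lo hi ∩ Iio x = extIoo lo x := by
  ext z
  simp only [extIoo, mem_inter_iff, mem_ofPred_eq, mem_Iio, WithTop.coe_lt_coe]
  exact ⟨fun hz => ⟨hz.1.1, hz.2⟩, fun hz => ⟨⟨hz.1, (WithTop.coe_lt_coe.2 hz.2).trans hx.2⟩, hz.2⟩⟩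

theorem extIoo_inter_Ioi {lo : WithBot M} {hi : WithTop M} {x : M} (hx : x ∈ extIoo lo hi) :
    extIoo lo hi ∩ Ioi x = extIoo x hi := by
  ext z
  simp only [extIoo, mem_inter_iff, mem_ofPred_eq, mem_Ioi, WithBot.coe_lt_coe]
  exact ⟨fun hz => ⟨hz.2, hz.1.2⟩, fun hz => ⟨⟨hx.1.trans (WithBot.coe_lt_coe.2 hz.1), hz.2⟩, hz.1⟩⟩

theorem inter_extIoo_top_cases {s : Set M} (hs : s.OrdConnected) (lo : WithBot M) :
    s ∩ extIoo lo ⊤ = ∅ ∨ s ∩ extIoo lo ⊤ = s ∨ ∃ a ∈ s, extIoo lo ⊤ = Ioi a := by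
  induction lo with
  | bot => simp [extIoo_bot_top]
  | coe a =>
    rw [extIoo_coe_top]
    by_cases ha : a ∈ s
    · exact Or.inr (Or.inr ⟨a, ha, rfl⟩)
    rcases (s ∩ Ioi a).eq_empty_or_nonempty with h | ⟨z, hz, haz⟩
    · exact Or.inl h
    · refine Or.inr (Or.inl (inter_eq_left.2 fun w hw => ?_))
      by_contra hwa
      exact ha (hs.out hw hz ⟨not_lt.1 hwa, haz.le⟩)

theorem inter_extIoo_bot_cases {s : Set M} (hs : s.OrdConnected) (hi : WithTop M) :
    s ∩ extIoo ⊥ hi = ∅ ∨ s ∩ extIoo ⊥ hi = s ∨ ∃ b ∈ s, extIoo ⊥ hi = Iio b := by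
  induction hi with
  | top => simp [extIoo_bot_top]
  | coe b =>
    rw [extIoo_bot_coe]
    by_cases hb : b ∈ s
    · exact Or.inr (Or.inr ⟨b, hb, rfl⟩)
    rcases (s ∩ Iio b).eq_empty_or_nonempty with h | ⟨z, hz, hzb⟩
    · exact Or.inl h
    · refine Or.inr (Or.inl (inter_eq_left.2 fun w hw => ?_))
      by_contra hwb
      exact hb (hs.out hz hw ⟨hzb.le, not_lt.1 hwb⟩)

theorem inter_extIoo_mem {s : Set M} (hs : s.OrdConnected) (lo : WithBot M) (hi : WithTop M) :
    s ∩ extIoo lo hi ∈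
      ({∅, s} ∪ ((s ∩ Iio ·) '' s ∪ (s ∩ Ioi ·) '' s) ∪ image2 Ioo s s : Set (Set M)) := by
  rw [extIoo_eq_inter, ← inter_assoc]
  rcases inter_extIoo_top_cases hs lo with hlo | hlo | ⟨a, ha, hlo⟩
  · simp [hlo]
  · rw [hlo]
    rcases inter_extIoo_bot_cases hs hi with hhi | hhi | ⟨b, hb, hhi⟩
    · simp [hhi]
    · simp [hhi]
    · exact Or.inl (Or.inr (Or.inl ⟨b, hb, by rw [hhi]⟩))
  · rw [inter_right_comm]
    rcases inter_extIoo_bot_cases hs hi with hhi | hhi | ⟨b, hb, hhi⟩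
    · simp [hhi]
    · rw [hhi, hlo]
      exact Or.inl (Or.inr (Or.inr ⟨a, ha, rfl⟩))
    · refine Or.inr ⟨a, ha, b, hb, ?_⟩
      rw [hhi, hlo, inter_assoc, Iio_inter_Ioi]
      exact (inter_eq_right.2 (Ioo_subset_Icc_self.trans (hs.out ha hb))).symm

theorem finite_image_of_determined {α β γ : Type*} [LinearOrder α] {s : Set α} {g : α → β}
    {h : α → α → γ} (hfin : (image2 h s s).Finite)
    (hdet : ∀ u ∈ s, ∀ z ∈ s, ∀ w ∈ s, u < z → u < w → h u z = h u w → g z = g w) :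
    (g '' s).Finite := by
  classical
  by_contra hinf
  obtain ⟨W, hWs, hW⟩ := (surjOn_image g s).exists_bijOn_subset
  have hWinf : W.Infinite := fun hfinW => hinf (hW.image_eq ▸ hfinW.image g)
  obtain ⟨F, hFW, hF⟩ := hWinf.exists_subset_card_eq (hfin.toFinset.card + 2)
  have hFne : F.Nonempty := Finset.card_pos.1 (by lia)
  -- The map `h u`, with `u` the least element of `F`, cannot be injective on the rest of `F`.
  set u := F.min' hFne
  have hu : u ∈ F := F.min'_mem hFne
  obtain ⟨z, hz, w, hw, hne, heq⟩ := Finset.exists_ne_map_eq_of_card_lt_of_maps_to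
    (s := F.erase u) (t := hfin.toFinset) (f := h u)
    (by rw [Finset.card_erase_of_mem hu]; lia)
    (fun z hz => by
      simpa using mem_image2_of_mem (hWs (hFW hu)) (hWs (hFW (Finset.mem_of_mem_erase hz))))
  have hz' := hFW (Finset.mem_of_mem_erase hz)
  have hw' := hFW (Finset.mem_of_mem_erase hw)
  exact hne (hW.injOn hz' hw' (hdet u (hWs (hFW hu)) z (hWs hz') w (hWs hw')
    (F.min'_lt_of_mem_erase_min' hFne hz) (F.min'_lt_of_mem_erase_min' hFne hw) heq))

variable (c : ι → Set M)

/-- Only finitely many full types are realized by the traces on `s` of open intervals. -/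
def FiniteIntervalTypes (s : Set M) : Prop :=
  (fullType c '' range fun p : WithBot M × WithTop M => s ∩ extIoo p.1 p.2).Finite

/-- Only finitely many full types are realized by the open intervals with endpoints in `s`. -/
def LocallyFiniteTypes (s : Set M) : Prop :=
  (fullType c '' image2 Ioo s s).Finite

variable {c}

theorem LocallyFiniteTypes.mono {s t : Set M} (h : LocallyFiniteTypes c t) (hst : s ⊆ t) :
    LocallyFiniteTypes c s :=
  h.subset (image_mono (image2_subset hst hst))

theorem LocallyFiniteTypes.exists_rank [Finite ι] {t : Set M} (ht : LocallyFiniteTypes c t) :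
    ∃ k, ∀ {s : Set M}, s.OrdConnected →
      rankedType c k '' image2 Ioo s s ⊆ rankedType c k '' image2 Ioo t t →
      LocallyFiniteTypes c s := by
  obtain ⟨K, hK⟩ := exists_rank_of_finite_fullType c ht
  refine ⟨K + 1, fun {s} hs hst => finite_fullType_of_rank c (K := K) fun _ hu _ hv huv =>
    fullType_eq_of_rankedType_eq c ?_ ?_ (fun u hu v hv huv => ?_) hu hv huv⟩
  · rintro _ ⟨x, hx, y, hy, rfl⟩ z hz
    refine ⟨x, hx, z, hs.out hx hy (Ioo_subset_Icc_self hz), ?_⟩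
    rw [Ioo_inter_Iio, min_eq_right hz.2.le]
  · rintro _ ⟨x, hx, y, hy, rfl⟩ z hz
    refine ⟨z, hs.out hx hy (Ioo_subset_Icc_self hz), y, hy, ?_⟩
    rw [Ioo_inter_Ioi, max_eq_right hz.1.le]
  · obtain ⟨u', hu', hu''⟩ := hst (mem_image_of_mem _ hu)
    obtain ⟨v', hv', hv''⟩ := hst (mem_image_of_mem _ hv)
    rw [← hu'', ← hv'']
    refine congrFun (hK u' hu' v' hv' ?_) (K + 1)
    rw [rankedType_eq_of_le c c K.le_succ hu'', huv, rankedType_eq_of_le c c K.le_succ hv'']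

theorem FiniteIntervalTypes.empty : FiniteIntervalTypes c ∅ := by
  refine (Set.finite_singleton (fullType c ∅)).subset ?_
  rintro _ ⟨_, ⟨p, rfl⟩, rfl⟩
  simp

theorem FiniteIntervalTypes.union {s t : Set M} (hs : FiniteIntervalTypes c s)
    (ht : FiniteIntervalTypes c t) (hst : ∀ x ∈ s, ∀ y ∈ t, x < y) :
    FiniteIntervalTypes c (s ∪ t) := by
  refine (hs.image2 (fun σ τ k => RankedType.add k (σ k) (τ k)) ht).subset ?_
  rintro _ ⟨_, ⟨p, rfl⟩, rfl⟩
  refine ⟨_, mem_image_of_mem _ ⟨p, rfl⟩, _, mem_image_of_mem _ ⟨p, rfl⟩, ?_⟩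
  simp only [union_inter_distrib_right]
  exact (fullType_union c fun x hx y hy => hst x hx.1 y hy.1).symm

theorem LocallyFiniteTypes.finite_inter_Iio {s : Set M} (hs : s.OrdConnected)
    (h : LocallyFiniteTypes c s) : (fullType c '' ((s ∩ Iio ·) '' s)).Finite := by
  rw [image_image]
  refine finite_image_of_determined (h := fun u z => fullType c (Ioo u z))
    (by rwa [← image_image2]) fun u hu z hz w hw huz huw heq => ?_
  have hsplit {z : M} (hz : z ∈ s) (huz : u < z) : s ∩ Iio z = (s ∩ Iic u) ∪ Ioo u z := by
    rw [← Iic_union_Ioo_eq_Iio huz, inter_union_distrib_left,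
      inter_eq_right.2 (Ioo_subset_Icc_self.trans (hs.out hu hz))]
  have hlt (z : M) : ∀ x ∈ s ∩ Iic u, ∀ y ∈ Ioo u z, x < y :=
    fun x hx y hy => lt_of_le_of_lt hx.2 hy.1
  simp only [hsplit hz huz, hsplit hw huw, fullType_union c (hlt _), heq]

theorem LocallyFiniteTypes.finite_inter_Ioi {s : Set M} (hs : s.OrdConnected)
    (h : LocallyFiniteTypes c s) : (fullType c '' ((s ∩ Ioi ·) '' s)).Finite := by
  have hfin : (image2 (fun u z => fullType c (Ioo z u)) s s).Finite := by
    rwa [← image2_swap, ← image_image2]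
  have hdet (u : M) (hu : u ∈ s) (z : M) (hz : z ∈ s) (w : M) (hw : w ∈ s) (hzu : z < u)
      (hwu : w < u) (heq : fullType c (Ioo z u) = fullType c (Ioo w u)) :
      fullType c (s ∩ Ioi z) = fullType c (s ∩ Ioi w) := by
    have hsplit {z : M} (hz : z ∈ s) (hzu : z < u) : s ∩ Ioi z = Ioo z u ∪ (s ∩ Ici u) := by
      rw [← Ioo_union_Ici_eq_Ioi hzu, inter_union_distrib_left,
        inter_eq_right.2 (Ioo_subset_Icc_self.trans (hs.out hz hu))]
    have hlt (z : M) : ∀ x ∈ Ioo z u, ∀ y ∈ s ∩ Ici u, x < y :=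
      fun x hx y hy => lt_of_lt_of_le hx.2 hy.2
    simp only [hsplit hz hzu, hsplit hw hwu, fullType_union c (hlt _), heq]
  rw [image_image]
  exact finite_image_of_determined (α := Mᵒᵈ) hfin hdet

theorem LocallyFiniteTypes.finiteIntervalTypes {s : Set M} (hs : s.OrdConnected)
    (h : LocallyFiniteTypes c s) : FiniteIntervalTypes c s := by
  refine Set.Finite.subset ?_ (image_mono (range_subset_iff.2 fun p => inter_extIoo_mem hs p.1 p.2))
  rw [image_union, image_union, image_union]
  exact ((toFinite _).union ((h.finite_inter_Iio hs).union (h.finite_inter_Ioi hs))).union h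

theorem setOf_lt_union_union_setOf_gt {D E : Set M} (hED : E ⊆ D) (hE : E.OrdConnected)
    (hne : E.Nonempty) :
    {z ∈ D | ∀ y ∈ E, z < y} ∪ E ∪ {z ∈ D | ∀ y ∈ E, y < z} = D := by
  obtain ⟨w, hw⟩ := hne
  refine Subset.antisymm (union_subset (union_subset (sep_subset _ _) hED) (sep_subset _ _))
    fun z hz => ?_
  by_cases hzE : z ∈ E
  · exact Or.inl (Or.inr hzE)
  rcases le_total z w with h | h
  · refine Or.inl (Or.inl ⟨hz, fun y hy => ?_⟩)
    by_contra hyz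
    exact hzE (hE.out hy hw ⟨not_lt.1 hyz, h⟩)
  · refine Or.inr ⟨hz, fun y hy => ?_⟩
    by_contra hyz
    exact hzE (hE.out hw hy ⟨h, not_lt.1 hyz⟩)

theorem finiteIntervalTypes_of_cover {κ : Type*} {C : κ → Set M} (hC : ∀ i, (C i).OrdConnected)
    (hfin : ∀ i, LocallyFiniteTypes c (C i)) (F : Finset κ) {D : Set M} (hD : D.OrdConnected)
    (hDF : D ⊆ ⋃ i ∈ F, C i) : FiniteIntervalTypes c D := by
  classical
  induction F using Finset.induction_on generalizing D with
  | empty =>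
    obtain rfl : D = ∅ := by simpa using hDF
    exact FiniteIntervalTypes.empty
  | insert i F _ ih =>
    have hrest {D' : Set M} (hD' : D'.OrdConnected) (hD'D : D' ⊆ D) (hdisj : Disjoint D' (C i)) :
        FiniteIntervalTypes c D' := by
      refine ih hD' (hdisj.subset_right_of_subset_union (hD'D.trans ?_))
      rwa [Finset.set_biUnion_insert] at hDF
    rcases (D ∩ C i).eq_empty_or_nonempty with hempty | hne
    · exact hrest hD subset_rfl (disjoint_iff_inter_eq_empty.2 hempty)
    have hE := hD.inter (hC i)
    have hlow : FiniteIntervalTypes c {z ∈ D | ∀ y ∈ D ∩ C i, z < y} :=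
      hrest ⟨fun x hx y hy z hz => ⟨hD.out hx.1 hy.1 hz, fun v hv => hz.2.trans_lt (hy.2 v hv)⟩⟩
        (sep_subset _ _) (disjoint_left.2 fun x hx hxC => (hx.2 x ⟨hx.1, hxC⟩).false)
    have hhigh : FiniteIntervalTypes c {z ∈ D | ∀ y ∈ D ∩ C i, y < z} :=
      hrest ⟨fun x hx y hy z hz => ⟨hD.out hx.1 hy.1 hz, fun v hv => (hx.2 v hv).trans_le hz.1⟩⟩
        (sep_subset _ _) (disjoint_left.2 fun x hx hxC => (hx.2 x ⟨hx.1, hxC⟩).false)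
    have hmid := ((hfin i).mono inter_subset_right).finiteIntervalTypes hE
    rw [← setOf_lt_union_union_setOf_gt inter_subset_left hE hne]
    refine (hlow.union hmid fun x hx y hy => hx.2 y hy).union hhigh ?_
    obtain ⟨w, hw⟩ := hne
    rintro x (hx | hx) y hy
    · exact (hx.2 w hw).trans (hy.2 w hw)
    · exact hy.2 x hx

end Intervals

/-! ### Uniform definability -/

section Definability

variable {ι : Type}

/-- A property of tuples in colored linear orders which is uniformly first-order definable. -/
def UniformlyDefinable {α : Type}
    (P : ∀ (M : Type) [LinearOrder M], (ι → Set M) → (α → M) → Prop) : Prop :=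
  ∃ φ : (CLOLang ι).Formula α, ∀ (M : Type) [LinearOrder M] (c : ι → Set M) (v : α → M),
    Sat M c φ v ↔ P M c v

namespace UniformlyDefinable

variable {α β : Type} {P Q : ∀ (M : Type) [LinearOrder M], (ι → Set M) → (α → M) → Prop}

theorem congr (hP : UniformlyDefinable P)
    (h : ∀ (M : Type) [LinearOrder M] (c : ι → Set M) (v : α → M), P M c v ↔ Q M c v) :
    UniformlyDefinable Q := by
  obtain ⟨φ, hφ⟩ := hP
  exact ⟨φ, fun M _ c v => (hφ M c v).trans (h M c v)⟩

theorem sat (φ : (CLOLang ι).Formula β) (f : β → α) :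
    UniformlyDefinable fun M _ c (v : α → M) => Sat M c φ (v ∘ f) :=
  ⟨φ.relabel f, fun M _ c v => by simp only [Sat, Formula.realize_relabel]⟩

theorem not (hP : UniformlyDefinable P) :
    UniformlyDefinable fun M _ c (v : α → M) => ¬ P M c v := by
  obtain ⟨φ, hφ⟩ := hP
  exact ⟨φ.not, fun M _ c v => by
    simp only [← hφ]
    simp only [Sat, Formula.realize_not]⟩

theorem and (hP : UniformlyDefinable P) (hQ : UniformlyDefinable Q) :
    UniformlyDefinable fun M _ c (v : α → M) => P M c v ∧ Q M c v := by
  obtain ⟨φ, hφ⟩ := hP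
  obtain ⟨ψ, hψ⟩ := hQ
  exact ⟨φ ⊓ ψ, fun M _ c v => by
    simp only [← hφ, ← hψ]
    simp only [Sat, Formula.realize_inf]⟩

theorem or (hP : UniformlyDefinable P) (hQ : UniformlyDefinable Q) :
    UniformlyDefinable fun M _ c (v : α → M) => P M c v ∨ Q M c v :=
  (hP.not.and hQ.not).not.congr fun M _ c v => by tauto

theorem const (p : Prop) : UniformlyDefinable fun M _ (_ : ι → Set M) (_ : α → M) => p := by
  by_cases hp : p
  · exact ⟨⊤, fun M _ c v => by simp [Sat, hp]⟩
  · exact ⟨⊥, fun M _ c v => by simp [Sat, hp]⟩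

theorem iff (hP : UniformlyDefinable P) (hQ : UniformlyDefinable Q) :
    UniformlyDefinable fun M _ c (v : α → M) => (P M c v ↔ Q M c v) :=
  ((hP.and hQ).or (hP.not.and hQ.not)).congr fun M _ c v => by tauto

theorem all_finite {J : Type} [Finite J]
    {P : J → ∀ (M : Type) [LinearOrder M], (ι → Set M) → (α → M) → Prop}
    (hP : ∀ j, UniformlyDefinable (P j)) :
    UniformlyDefinable fun M _ c (v : α → M) => ∀ j, P j M c v := by
  choose φ hφ using hP
  refine ⟨Formula.iInf φ, fun M _ c v => ?_⟩
  simp only [← hφ]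
  simp only [Sat, Formula.realize_iInf]

theorem ex {P : ∀ (M : Type) [LinearOrder M], (ι → Set M) → (α ⊕ Unit → M) → Prop}
    (hP : UniformlyDefinable P) :
    UniformlyDefinable fun M _ c (v : α → M) => ∃ x : M, P M c (Sum.elim v fun _ => x) := by
  obtain ⟨φ, hφ⟩ := hP
  refine ⟨Formula.iExs Unit φ, fun M _ c v => ?_⟩
  simp only [← hφ]
  simp only [Sat, Formula.realize_iExs]
  exact ⟨fun ⟨w, hw⟩ => ⟨w (), hw⟩, fun ⟨x, hx⟩ => ⟨fun _ => x, hx⟩⟩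

theorem lt (a b : α) : UniformlyDefinable fun M _ (_ : ι → Set M) (v : α → M) => v a < v b :=
  ⟨Relations.formula₂ (L := CLOLang ι) (CLORel.lt : CLORel ι 2) (Term.var a) (Term.var b),
    fun M _ c v => by
      let _ := CLOStr ι M c
      exact Formula.realize_rel₂⟩

theorem color (i : ι) (a : α) :
    UniformlyDefinable fun M _ (c : ι → Set M) (v : α → M) => v a ∈ c i :=
  ⟨Relations.formula₁ (L := CLOLang ι) (CLORel.color i : CLORel ι 1) (Term.var a),
    fun M _ c v => by
      let _ := CLOStr ι M c
      exact Formula.realize_rel₁⟩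

theorem mem_extIoo (lo : WithBot α) (hi : WithTop α) (a : α) :
    UniformlyDefinable fun M _ (_ : ι → Set M) (v : α → M) =>
      v a ∈ extIoo (lo.map v) (hi.map v) := by
  refine UniformlyDefinable.and ?_ ?_
  · induction lo with
    | bot => exact (const True).congr fun _ _ _ _ => by simp
    | coe b => exact (lt b a).congr fun _ _ _ _ => by simp
  · induction hi with
    | top => exact (const True).congr fun _ _ _ _ => by simp
    | coe b => exact (lt a b).congr fun _ _ _ _ => by simp

theorem rankedType_extIoo [Finite ι] (k : ℕ) (lo : WithBot α) (hi : WithTop α)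
    (τ : RankedType ι k) : UniformlyDefinable fun M _ (c : ι → Set M) (v : α → M) =>
      rankedType c k (extIoo (lo.map v) (hi.map v)) = τ := by
  induction k generalizing α with
  | zero => exact (const True).congr fun _ _ _ _ => iff_of_true trivial rfl
  | succ k ih =>
    have hsplit (p : Set ι × RankedType ι k × RankedType ι k) :
        UniformlyDefinable fun M _ (c : ι → Set M) (v : α ⊕ Unit → M) =>
          v (Sum.inr ()) ∈ extIoo ((lo.map Sum.inl).map v) ((hi.map Sum.inl).map v) ∧
          (∀ i, v (Sum.inr ()) ∈ c i ↔ i ∈ p.1) ∧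
          rankedType c k (extIoo ((lo.map Sum.inl).map v) (v (Sum.inr ()))) = p.2.1 ∧
          rankedType c k (extIoo (v (Sum.inr ())) ((hi.map Sum.inl).map v)) = p.2.2 :=
      (mem_extIoo _ _ _).and ((all_finite fun i => (color i _).iff (const _)).and
        ((ih (lo.map Sum.inl) (WithTop.some (Sum.inr ())) p.2.1).and
          (ih (WithBot.some (Sum.inr ())) (hi.map Sum.inl) p.2.2)))
    refine (all_finite fun p => (hsplit p).ex.iff (const (p ∈ (show Set _ from τ)))).congr
      fun M _ c v => ?_
    rw [rankedType_succ]
    refine Iff.trans (forall_congr' fun p => iff_congr (exists_congr fun x => ?_) Iff.rfl)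
      Set.ext_iff.symm
    have hlo : (lo.map Sum.inl).map (Sum.elim v fun _ : Unit => x) = lo.map v := by
      induction lo <;> rfl
    have hhi : (hi.map Sum.inl).map (Sum.elim v fun _ : Unit => x) = hi.map v := by
      induction hi <;> rfl
    simp only [hlo, hhi, Sum.elim_inr]
    refine and_congr_right fun hx => ?_
    rw [extIoo_inter_Iio hx, extIoo_inter_Ioi hx, Prod.ext_iff, Prod.ext_iff, Set.ext_iff]
    rfl

theorem exists_rankedType_extIoo [Finite ι] (k : ℕ) (τ : RankedType ι k) :
    UniformlyDefinable fun M _ (c : ι → Set M) (_ : Empty → M) =>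
      ∃ (lo : WithBot M) (hi : WithTop M), rankedType c k (extIoo lo hi) = τ := by
  have hbt := rankedType_extIoo k (⊥ : WithBot Empty) ⊤ τ
  have hct := (rankedType_extIoo (α := Empty ⊕ Unit) k (WithBot.some (Sum.inr ())) ⊤ τ).ex
  have hbc := (rankedType_extIoo (α := Empty ⊕ Unit) k ⊥ (WithTop.some (Sum.inr ())) τ).ex
  have hcc := (rankedType_extIoo (α := (Empty ⊕ Unit) ⊕ Unit) k
    (WithBot.some (Sum.inl (Sum.inr ()))) (WithTop.some (Sum.inr ())) τ).ex.ex
  refine (hbt.or (hct.or (hbc.or hcc))).congr fun M _ c v => ?_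
  simp only [WithBot.exists, WithTop.exists, WithBot.map_bot, WithTop.map_top, WithBot.map_coe,
    WithTop.map_coe, Sum.elim_inl, Sum.elim_inr, exists_or]
  tauto

theorem iff_of_cloEquiv {P : ∀ (M : Type) [LinearOrder M], (ι → Set M) → (Empty → M) → Prop}
    (hP : UniformlyDefinable P) {M N : Type} [LinearOrder M] [LinearOrder N] {c : ι → Set M}
    {d : ι → Set N} (h : CLOEquiv ι M c N d) (v : Empty → M) (w : Empty → N) :
    P M c v ↔ P N d w := by
  obtain ⟨φ, hφ⟩ := hP
  rw [← hφ, ← hφ, Unique.eq_default v, Unique.eq_default w]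
  let _ := CLOStr ι M c
  let _ := CLOStr ι N d
  exact elementarilyEquivalent_iff.1 h φ

end UniformlyDefinable

end Definability

/-! ### Models as colored linear orders -/

section Conversion

universe u

variable {ι : Type}

instance [Countable ι] (n : ℕ) : Countable (CLORel ι n) := by
  let f : CLORel ι n → Option ι
    | .lt => none
    | .color i => some i
  refine Function.Injective.countable (f := f) ?_
  rintro (_ | i) s h <;> cases s <;> simp_all [f]

instance [Countable ι] : Countable (CLOLang ι).Symbols :=
  inferInstanceAs (Countable ((Σ _ : ℕ, Empty) ⊕ Σ n, CLORel ι n))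

theorem isStrictTotalOrder_relMap_of_elementarilyEquivalent {L : Language} (r : L.Relations 2)
    {M N : Type u} [L.Structure M] [L.Structure N] (h : N ≅[L] M)
    (hM : IsStrictTotalOrder M fun x y => Structure.RelMap r ![x, y]) :
    IsStrictTotalOrder N fun x y => Structure.RelMap r ![x, y] := by
  have hirr : N ⊨ r.irreflexive :=
    (elementarilyEquivalent_iff.1 h _).2 (Relations.realize_irreflexive.2 inferInstance)
  have htrans : N ⊨ r.transitive :=
    (elementarilyEquivalent_iff.1 h _).2 (Relations.realize_transitive.2 inferInstance)
  let tri : L.Sentence := (r.boundedFormula₂ (&0) (&1) ⊔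
    (r.boundedFormula₂ (&1) (&0) ⊔ Term.bdEqual (&0) (&1))).all.all
  have htri (K : Type u) [L.Structure K] : K ⊨ tri ↔
      ∀ x y : K, Structure.RelMap r ![x, y] ∨ Structure.RelMap r ![y, x] ∨ x = y := by
    simp only [tri, Sentence.Realize, Formula.Realize, BoundedFormula.realize_all,
      BoundedFormula.realize_sup, BoundedFormula.realize_rel₂, BoundedFormula.realize_bdEqual]
    rfl
  have htriN := (htri N).1 ((elementarilyEquivalent_iff.1 h _).2 ((htri M).2 fun x y =>
    (trichotomous_of (fun x y => Structure.RelMap r ![x, y]) x y).imp_right Or.symm))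
  exact { toIsTrans := Relations.realize_transitive.1 htrans
          toIrrefl := Relations.realize_irreflexive.1 hirr
          toTrichotomous := ⟨fun x y hxy hyx =>
            ((htriN x y).resolve_left hxy).resolve_left hyx⟩ }

theorem exists_cloStr_eq {M N : Type} [LinearOrder M] (c : ι → Set M)
    [inst : (CLOLang ι).Structure N]
    (h : letI := CLOStr ι M c; N ≅[CLOLang ι] M) :
    ∃ (_ : LinearOrder N) (d : ι → Set N), CLOStr ι N d = inst := by
  classical
  let _ := CLOStr ι M c
  let r : (CLOLang ι).Relations 2 := (CLORel.lt : CLORel ι 2)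
  have := isStrictTotalOrder_relMap_of_elementarilyEquivalent r h
    (inferInstanceAs (IsStrictTotalOrder M (· < ·)))
  refine ⟨linearOrderOfSTO fun x y : N => Structure.RelMap r ![x, y], fun i => {x |
    Structure.RelMap (show (CLOLang ι).Relations 1 from (CLORel.color i : CLORel ι 1)) ![x]},
    Structure.ext (funext fun n => funext fun f => Empty.elim f) ?_⟩
  funext n R
  change CLORel ι n at R
  funext v
  cases R with
  | lt =>
    change Structure.RelMap r ![v 0, v 1] = _
    congr 1
    ext i; fin_cases i <;> rfl
  | color i =>
    change Structure.RelMap _ ![v 0] = _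
    congr 1
    ext i; fin_cases i; rfl

theorem locallyFiniteTypes_of_aleph0CatTheory [Finite ι] {M : Type} [LinearOrder M]
    (c : ι → Set M) (h : Aleph0CatTheory ι (CLOTheory ι M c)) : LocallyFiniteTypes c univ := by
  let _ := CLOStr ι M c
  let elemType (v : Fin 2 → M) : Set ((CLOLang ι).Formula (Fin 2)) := {φ | φ.Realize v}
  let fullTypeIoo (v : Fin 2 → M) := fullType c (Ioo (v 0) (v 1))
  have hfin : (range elemType).Finite := finite_range_type_of_categorical (by
    intro N₁ N₂ s₁ s₂ hc₁ hc₂ h₁ h₂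
    obtain ⟨i₁, d₁, rfl⟩ := exists_cloStr_eq c h₁
    obtain ⟨i₂, d₂, rfl⟩ := exists_cloStr_eq c h₂
    exact h N₁ N₂ i₁ i₂ d₁ d₂ hc₁ hc₂ h₁ h₂) (Fin 2)
  have hfactors : fullTypeIoo.FactorsThrough elemType := by
    intro v w hvw
    funext k
    obtain ⟨φ, hφ⟩ := UniformlyDefinable.rankedType_extIoo (α := Fin 2) k (WithBot.some 0)
      (WithTop.some 1) (rankedType c k (Ioo (w 0) (w 1)))
    simp only [WithBot.map_coe, WithTop.map_coe, extIoo_coe_coe] at hφ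
    exact (hφ M c v).1 ((Set.ext_iff.1 hvw φ).2 ((hφ M c w).2 rfl))
  refine (hfin.image (Function.extend elemType fullTypeIoo fun _ => fullType c ∅)).subset ?_
  rintro _ ⟨_, ⟨x, _, y, _, rfl⟩, rfl⟩
  exact ⟨_, ⟨![x, y], rfl⟩, hfactors.extend_apply _ _⟩

theorem locallyFiniteTypes_of_subColor {M : Type} [LinearOrder M] (c : ι → Set M) {s : Set M}
    (hs : s.OrdConnected) (h : LocallyFiniteTypes (subColor c s) univ) :
    LocallyFiniteTypes c s := by
  refine h.subset ?_
  rintro _ ⟨_, ⟨x, hx, y, hy, rfl⟩, rfl⟩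
  refine ⟨_, ⟨⟨x, hx⟩, mem_univ _, ⟨y, hy⟩, mem_univ _, rfl⟩, funext fun k => ?_⟩
  have himage : (Subtype.val : s → M) '' Ioo ⟨x, hx⟩ ⟨y, hy⟩ = Ioo x y := by
    ext z
    refine ⟨?_, fun hz => ⟨⟨z, hs.out hx hy ⟨hz.1.le, hz.2.le⟩⟩, hz, rfl⟩⟩
    rintro ⟨w, hw, rfl⟩
    exact hw
  unfold fullType
  rw [← himage]
  exact (rankedType_image (subColor c s) c (Subtype.strictMono_coe s) (fun _ => rfl) k _).symm

theorem suffSaturated_of_isEmpty {M : Type} [LinearOrder M] [IsEmpty M] (c : ι → Set M) :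
    SuffSaturated ι M c :=
  ⟨fun _ _ _ h => isEmptyElim (h ∅ (by simp)).choose,
    fun _ a b _ => ⟨Equiv.refl M, fun _ _ => Iff.rfl, fun _ _ => Iff.rfl,
      fun i => isEmptyElim (a i)⟩⟩

theorem exists_suffSaturated {M : Type} [LinearOrder M] (c : ι → Set M) :
    ∃ (S : Type) (_ : LinearOrder S) (cS : ι → Set S),
      CLOEquiv ι S cS M c ∧ SuffSaturated ι S cS := by
  rcases isEmpty_or_nonempty M with _ | _
  · exact ⟨M, inferInstance, c, rfl, suffSaturated_of_isEmpty c⟩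
  let _ := CLOStr ι M c
  obtain ⟨S, s, hS, hsat, hhom⟩ := exists_saturated_homogeneous (L := CLOLang ι) M
  obtain ⟨i, cS, rfl⟩ := exists_cloStr_eq c hS
  refine ⟨S, i, cS, hS, fun m a p hp => ?_, fun m a b hab => ?_⟩
  · obtain ⟨v, hv⟩ := hsat m a p fun q hq => (hp q hq).imp' (fun x _ => x) fun _ hx => hx
    exact ⟨v (), hv⟩
  let _ := CLOStr ι S cS
  obtain ⟨g, hg⟩ := hhom m a b hab
  refine ⟨g.toEquiv, fun x y => ?_, fun k x => ?_, hg⟩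
  · exact (g.map_rel (show (CLOLang ι).Relations 2 from (CLORel.lt : CLORel ι 2)) ![x, y]).symm
  · exact (g.map_rel (show (CLOLang ι).Relations 1 from (CLORel.color k : CLORel ι 1)) ![x]).symm

end Conversion

/-! ### Convex types -/

section LocalTypes

variable {ι S M₀ : Type} [LinearOrder S] [LinearOrder M₀] {cS : ι → Set S} {c₀ : ι → Set M₀}

theorem cloEquiv_iff {M N : Type} [LinearOrder M] [LinearOrder N] {c : ι → Set M}
    {d : ι → Set N} : CLOEquiv ι M c N d ↔ CLOTheory ι M c = CLOTheory ι N d :=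
  Iff.rfl

/-- The convex formulas satisfied by a point. -/
def convexTypeOf (c₀ : ι → Set M₀) (cS : ι → Set S) (a : S) : Set ((CLOLang ι).Formula Unit) :=
  {ψ | ConvexFml ι M₀ c₀ ψ ∧ Sat S cS ψ fun _ => a}

theorem UniformlyDefinable.forall_fmlSet_lt (ψ : (CLOLang ι).Formula Unit) :
    UniformlyDefinable fun M _ c (v : Unit → M) => ∀ y ∈ FmlSet ι M c ψ, y < v () :=
  ((sat (α := Unit ⊕ Unit) ψ fun _ => Sum.inr ()).and
    (lt (Sum.inr ()) (Sum.inl ())).not).ex.not.congr fun M _ c v => by push Not; rfl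

theorem UniformlyDefinable.forall_fmlSet_gt (ψ : (CLOLang ι).Formula Unit) :
    UniformlyDefinable fun M _ c (v : Unit → M) => ∀ y ∈ FmlSet ι M c ψ, v () < y :=
  ((sat (α := Unit ⊕ Unit) ψ fun _ => Sum.inr ()).and
    (lt (Sum.inl ()) (Sum.inr ())).not).ex.not.congr fun M _ c v => by push Not; rfl

theorem exists_disjoint_mem_convexTypeOf {ψ : (CLOLang ι).Formula Unit} {a : S}
    (hψ : (FmlSet ι S cS ψ).OrdConnected) (ha : a ∉ FmlSet ι S cS ψ) :
    ∃ θ ∈ convexTypeOf c₀ cS a, ∀ (B : Type) [LinearOrder B] (cB : ι → Set B),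
      Disjoint (FmlSet ι B cB θ) (FmlSet ι B cB ψ) := by
  by_cases hw : ∃ w ∈ FmlSet ι S cS ψ, w < a
  · obtain ⟨w, hw, hwa⟩ := hw
    obtain ⟨θ, hθ⟩ := UniformlyDefinable.forall_fmlSet_lt ψ
    refine ⟨θ, ⟨fun C _ cC _ => ⟨fun x hx _ _ z hz => ?_⟩, (hθ S cS _).2 fun y hy => ?_⟩,
      fun B _ cB => disjoint_left.2 fun b hbθ hbψ => ((hθ B cB _).1 hbθ b hbψ).false⟩
    · exact (hθ C cC _).2 fun v hv => ((hθ C cC _).1 hx v hv).trans_le hz.1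
    · exact not_le.1 fun hay => ha (hψ.out hw hy ⟨hwa.le, hay⟩)
  · obtain ⟨θ, hθ⟩ := UniformlyDefinable.forall_fmlSet_gt ψ
    refine ⟨θ, ⟨fun C _ cC _ => ⟨fun _ _ x hx z hz => ?_⟩, (hθ S cS _).2 fun y hy => ?_⟩,
      fun B _ cB => disjoint_left.2 fun b hbθ hbψ => ((hθ B cB _).1 hbθ b hbψ).false⟩
    · exact (hθ C cC _).2 fun v hv => hz.2.trans_lt ((hθ C cC _).1 hx v hv)
    · exact lt_of_le_of_ne (not_lt.1 fun hya => hw ⟨y, hy, hya⟩) fun hay => ha (hay ▸ hy)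

theorem isConvexType_convexTypeOf (hS : CLOEquiv ι S cS M₀ c₀) (a : S) :
    IsConvexType ι M₀ c₀ (convexTypeOf c₀ cS a) := by
  refine ⟨fun _ h => h.1, ⟨S, inferInstance, cS, hS, a, fun _ h => h.2⟩, ?_⟩
  rintro ψ hψ ⟨B, iB, cB, -, b, hb⟩
  by_contra hmem
  obtain ⟨θ, hθ, hdisj⟩ := exists_disjoint_mem_convexTypeOf (c₀ := c₀)
    (hψ S inferInstance cS hS) fun ha => hmem ⟨hψ, ha⟩
  exact disjoint_left.1 (hdisj B cB) (hb θ (mem_insert_of_mem _ hθ)) (hb ψ (mem_insert _ _))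

theorem ordConnected_typeSet_convexTypeOf (hS : CLOEquiv ι S cS M₀ c₀) (a : S) :
    (TypeSet ι S cS (convexTypeOf c₀ cS a)).OrdConnected :=
  ⟨fun _ hx _ hy _ hz ψ hψ => (hψ.1 S inferInstance cS hS).out (hx ψ hψ) (hy ψ hψ) hz⟩

theorem fmlSet_iInf {J M : Type} [Finite J] [LinearOrder M] (c : ι → Set M)
    (ψ : J → (CLOLang ι).Formula Unit) :
    FmlSet ι M c (Formula.iInf ψ) = ⋂ j, FmlSet ι M c (ψ j) := by
  ext x
  simp only [FmlSet, Sat, Formula.realize_iInf, mem_iInter, mem_ofPred_eq]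

theorem iInf_mem_convexTypeOf {J : Type} [Finite J] {a : S}
    {ψ : J → (CLOLang ι).Formula Unit} (h : ∀ j, ψ j ∈ convexTypeOf c₀ cS a) :
    Formula.iInf ψ ∈ convexTypeOf c₀ cS a := by
  refine ⟨fun B iB cB hB => ?_, (fmlSet_iInf cS ψ).ge (mem_iInter.2 fun j => (h j).2)⟩
  rw [fmlSet_iInf]
  exact ordConnected_iInter fun j => (h j).1 B iB cB hB

theorem exists_mem_convexTypeOf_fmlSet_subset {a : S}
    (t : Finset (convexTypeOf c₀ cS a)) :
    ∃ ψ ∈ convexTypeOf c₀ cS a, ∀ θ ∈ t, FmlSet ι S cS ψ ⊆ FmlSet ι S cS θ :=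
  ⟨_, iInf_mem_convexTypeOf (J := t) fun θ => θ.1.2,
    fun θ hθ => (fmlSet_iInf cS _).trans_subset (iInter_subset_of_subset ⟨θ, hθ⟩ subset_rfl)⟩

theorem Aleph0Saturated.exists_forall (hsat : Aleph0Saturated ι S cS) {m : ℕ} (a : Fin m → S)
    {J : Type} {Q : J → ∀ (M : Type) [LinearOrder M], (ι → Set M) → (Unit ⊕ Fin m → M) → Prop}
    (hQ : ∀ j, UniformlyDefinable (Q j))
    (h : ∀ t : Finset J, ∃ x, ∀ j ∈ t, Q j S cS (Sum.elim (fun _ => x) a)) :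
    ∃ x, ∀ j, Q j S cS (Sum.elim (fun _ => x) a) := by
  classical
  choose φ hφ using hQ
  obtain ⟨x, hx⟩ := hsat m a (range φ) fun q hq => by
    rw [← image_univ] at hq
    obtain ⟨t, -, rfl⟩ := Finset.subset_set_image_iff.1 hq
    obtain ⟨x, hx⟩ := h t
    exact ⟨x, Finset.forall_mem_image.2 fun j hj => (hφ j S cS _).2 (hx j hj)⟩
  exact ⟨x, fun j => (hφ j S cS _).1 (hx _ ⟨j, rfl⟩)⟩

theorem Aleph0Saturated.mem_rankedType_image_typeSet [Finite ι] (hsat : Aleph0Saturated ι S cS)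
    (a : S) {k : ℕ} {τ : RankedType ι k}
    (h : ∀ ψ ∈ convexTypeOf c₀ cS a,
      τ ∈ rankedType cS k '' image2 Ioo (FmlSet ι S cS ψ) (FmlSet ι S cS ψ)) :
    τ ∈ rankedType cS k '' image2 Ioo (TypeSet ι S cS (convexTypeOf c₀ cS a))
      (TypeSet ι S cS (convexTypeOf c₀ cS a)) := by
  have hx : ∃ x, ∀ ψ : convexTypeOf c₀ cS a, x ∈ FmlSet ι S cS ψ ∧
      ∃ y ∈ FmlSet ι S cS ψ, rankedType cS k (Ioo x y) = τ := by
    have hdef (ψ : convexTypeOf c₀ cS a) := (UniformlyDefinable.sat ψ.1 fun _ => Sum.inl ()).and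
      ((UniformlyDefinable.sat ψ.1 fun _ => Sum.inr ()).and
        (UniformlyDefinable.rankedType_extIoo (α := (Unit ⊕ Fin 0) ⊕ Unit) k
          (WithBot.some (Sum.inl (Sum.inl ()))) (WithTop.some (Sum.inr ())) τ)).ex
    simp only [WithBot.map_coe, WithTop.map_coe, extIoo_coe_coe] at hdef
    refine hsat.exists_forall Fin.elim0 hdef fun t => ?_
    obtain ⟨ψ, hψ, ht⟩ := exists_mem_convexTypeOf_fmlSet_subset t
    obtain ⟨_, ⟨x, hx, y, hy, rfl⟩, hxy⟩ := h ψ hψ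
    exact ⟨x, fun θ hθ => ⟨ht θ hθ hx, y, ht θ hθ hy, hxy⟩⟩
  obtain ⟨x, hx⟩ := hx
  have hy : ∃ y, ∀ ψ : convexTypeOf c₀ cS a, y ∈ FmlSet ι S cS ψ ∧
      rankedType cS k (Ioo x y) = τ := by
    have hdef (ψ : convexTypeOf c₀ cS a) := (UniformlyDefinable.sat ψ.1 fun _ => Sum.inl ()).and
      (UniformlyDefinable.rankedType_extIoo (α := Unit ⊕ Fin 1) k
        (WithBot.some (Sum.inr 0)) (WithTop.some (Sum.inl ())) τ)
    simp only [WithBot.map_coe, WithTop.map_coe, extIoo_coe_coe] at hdef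
    refine hsat.exists_forall (fun _ => x) hdef fun t => ?_
    obtain ⟨ψ, hψ, ht⟩ := exists_mem_convexTypeOf_fmlSet_subset t
    obtain ⟨y, hy, hxy⟩ := (hx ⟨ψ, hψ⟩).2
    exact ⟨y, fun θ hθ => ⟨ht θ hθ hy, hxy⟩⟩
  obtain ⟨y, hy⟩ := hy
  obtain ⟨ψ, hψ, -⟩ := exists_mem_convexTypeOf_fmlSet_subset (c₀ := c₀) (cS := cS) (a := a) ∅
  exact ⟨_, ⟨x, fun ψ hψ => (hx ⟨ψ, hψ⟩).1, y, fun ψ hψ => (hy ⟨ψ, hψ⟩).1, rfl⟩, (hy ⟨ψ, hψ⟩).2⟩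

theorem Aleph0Saturated.exists_rankedType_image_fmlSet_subset [Finite ι]
    (hsat : Aleph0Saturated ι S cS) (a : S) (k : ℕ) :
    ∃ ψ ∈ convexTypeOf c₀ cS a,
      rankedType cS k '' image2 Ioo (FmlSet ι S cS ψ) (FmlSet ι S cS ψ) ⊆
        rankedType cS k '' image2 Ioo (TypeSet ι S cS (convexTypeOf c₀ cS a))
          (TypeSet ι S cS (convexTypeOf c₀ cS a)) := by
  have havoid (τ : RankedType ι k) : ∃ ψ ∈ convexTypeOf c₀ cS a,
      τ ∈ rankedType cS k '' image2 Ioo (FmlSet ι S cS ψ) (FmlSet ι S cS ψ) →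
      τ ∈ rankedType cS k '' image2 Ioo (TypeSet ι S cS (convexTypeOf c₀ cS a))
        (TypeSet ι S cS (convexTypeOf c₀ cS a)) := by
    by_contra! hcon
    obtain ⟨ψ, hψ, -⟩ :=
      exists_mem_convexTypeOf_fmlSet_subset (c₀ := c₀) (cS := cS) (a := a) ∅
    exact (hcon ψ hψ).2 (hsat.mem_rankedType_image_typeSet a fun ψ hψ => (hcon ψ hψ).1)
  choose ψ hψ hψτ using havoid
  refine ⟨_, iInf_mem_convexTypeOf hψ, fun τ hτ => hψτ τ ?_⟩
  have hsub : FmlSet ι S cS (Formula.iInf ψ) ⊆ FmlSet ι S cS (ψ τ) :=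
    (fmlSet_iInf cS ψ).trans_subset (iInter_subset _ τ)
  exact image_mono (image2_subset hsub hsub) hτ

theorem finiteIntervalTypes_of_locallySimple [Finite ι] (hLS : LocallySimple ι M₀ c₀)
    (hS : CLOEquiv ι S cS M₀ c₀) (hsat : SuffSaturated ι S cS) :
    FiniteIntervalTypes cS univ := by
  have hloc (a : S) : ∃ ψ ∈ convexTypeOf c₀ cS a, LocallyFiniteTypes cS (FmlSet ι S cS ψ) := by
    have htype : LocallyFiniteTypes cS (TypeSet ι S cS (convexTypeOf c₀ cS a)) :=
      locallyFiniteTypes_of_subColor cS (ordConnected_typeSet_convexTypeOf hS a) <|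
        locallyFiniteTypes_of_aleph0CatTheory _ <|
        hLS S cS hS hsat _ (isConvexType_convexTypeOf hS a)
    obtain ⟨k, hk⟩ := htype.exists_rank
    obtain ⟨ψ, hψ, hsub⟩ := hsat.1.exists_rankedType_image_fmlSet_subset (c₀ := c₀) a k
    exact ⟨ψ, hψ, hk (hψ.1 S inferInstance cS hS) hsub⟩
  choose ψ hψ hfin using hloc
  obtain ⟨t, ht⟩ : ∃ t : Finset S, ∀ x, ∃ a ∈ t, x ∈ FmlSet ι S cS (ψ a) := by
    by_contra! hcon
    obtain ⟨x, hx⟩ := hsat.1.exists_forall (m := 0) Fin.elim0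
      (fun a : S => (UniformlyDefinable.sat (ψ a) fun _ => Sum.inl ()).not) hcon
    exact hx x (hψ x).2
  exact finiteIntervalTypes_of_cover (fun a => (hψ a).1 S inferInstance cS hS) hfin t
    ordConnected_univ fun x _ => mem_iUnion₂.2 (by simpa using ht x)

theorem exists_rank_of_locallySimple [Finite ι] (hLS : LocallySimple ι M₀ c₀) :
    ∃ K, ∀ (A B : Type) [LinearOrder A] [LinearOrder B] (cA : ι → Set A) (cB : ι → Set B),
      CLOEquiv ι A cA M₀ c₀ → CLOEquiv ι B cB M₀ c₀ → ∀ lo hi lo' hi',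
      rankedType cA K (extIoo lo hi) = rankedType cB K (extIoo lo' hi') →
      rankedType cA (K + 1) (extIoo lo hi) = rankedType cB (K + 1) (extIoo lo' hi') := by
  obtain ⟨S, iS, cS, hS, hsat⟩ := exists_suffSaturated c₀
  have hfin := finiteIntervalTypes_of_locallySimple hLS hS hsat
  simp only [FiniteIntervalTypes, univ_inter] at hfin
  obtain ⟨K, hK⟩ := exists_rank_of_finite_fullType cS hfin
  refine ⟨K, fun A B _ _ cA cB hA hB lo hi lo' hi' heq => ?_⟩
  have hreal (C : Type) [LinearOrder C] (cC : ι → Set C) (hC : CLOEquiv ι C cC M₀ c₀)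
      (lo : WithBot C) (hi : WithTop C) : ∃ (lo' : WithBot S) (hi' : WithTop S),
      rankedType cS (K + 1) (extIoo lo' hi') = rankedType cC (K + 1) (extIoo lo hi) :=
    ((UniformlyDefinable.exists_rankedType_extIoo (K + 1) _).iff_of_cloEquiv
      (cloEquiv_iff.2 ((cloEquiv_iff.1 hC).trans (cloEquiv_iff.1 hS).symm))
      Empty.elim Empty.elim).1 ⟨lo, hi, rfl⟩
  obtain ⟨x, y, hA'⟩ := hreal A cA hA lo hi
  obtain ⟨z, w, hB'⟩ := hreal B cB hB lo' hi'
  rw [← hA', ← hB']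
  refine congrFun (hK _ ⟨(x, y), rfl⟩ _ ⟨(z, w), rfl⟩ ?_) (K + 1)
  exact (rankedType_eq_of_le cS cA K.le_succ hA').trans
    (heq.trans (rankedType_eq_of_le cS cB K.le_succ hB').symm)

end LocalTypes

/-! ### Back-and-forth -/

section BackAndForth

variable {ι A B : Type} [LinearOrder A] [LinearOrder B] {cA : ι → Set A} {cB : ι → Set B} {K : ℕ}

/-- `RankedMatching cA cB K lo hi lo' hi' f`: the finite set of pairs `f` matches points of
`(lo, hi)` with points of `(lo', hi')` preserving order and colors, and corresponding gaps between
consecutive matched points have the same rank-`K` type. Encoded as a binary tree, which makes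
refining a single gap an induction. -/
inductive RankedMatching (cA : ι → Set A) (cB : ι → Set B) (K : ℕ) :
    WithBot A → WithTop A → WithBot B → WithTop B → Finset (A × B) → Prop
  | nil {lo hi lo' hi'} (h : rankedType cA K (extIoo lo hi) = rankedType cB K (extIoo lo' hi')) :
    RankedMatching cA cB K lo hi lo' hi' ∅
  | node {lo hi lo' hi' x y f g} (hx : x ∈ extIoo lo hi) (hy : y ∈ extIoo lo' hi')
    (hxy : colorSet cA x = colorSet cB y) (hf : RankedMatching cA cB K lo x lo' y f)
    (hg : RankedMatching cA cB K x hi y hi' g) :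
    RankedMatching cA cB K lo hi lo' hi' (insert (x, y) (f ∪ g))

namespace RankedMatching

variable {lo : WithBot A} {hi : WithTop A} {lo' : WithBot B} {hi' : WithTop B} {f : Finset (A × B)}

theorem symm (h : RankedMatching cA cB K lo hi lo' hi' f) :
    RankedMatching cB cA K lo' hi' lo hi (f.image Prod.swap) := by
  induction h with
  | nil h => exact nil h.symm
  | node hx hy hxy _ _ hf hg =>
    rw [Finset.image_insert, Finset.image_union]
    exact node hy hx hxy.symm hf hg

theorem mem_extIoo (h : RankedMatching cA cB K lo hi lo' hi' f) :
    ∀ p ∈ f, p.1 ∈ extIoo lo hi ∧ p.2 ∈ extIoo lo' hi' := by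
  induction h with
  | nil => simp
  | node hx hy _ _ _ hf hg =>
    simp only [Finset.forall_mem_insert, Finset.forall_mem_union]
    rw [← extIoo_inter_Iio hx, ← extIoo_inter_Iio hy] at hf
    rw [← extIoo_inter_Ioi hx, ← extIoo_inter_Ioi hy] at hg
    exact ⟨⟨hx, hy⟩, fun p hp => ⟨(hf p hp).1.1, (hf p hp).2.1⟩,
      fun p hp => ⟨(hg p hp).1.1, (hg p hp).2.1⟩⟩

theorem lt_and_lt_of_coe_right {x : A} {y : B} (h : RankedMatching cA cB K lo x lo' y f)
    {p : A × B} (hp : p ∈ f) : p.1 < x ∧ p.2 < y :=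
  ⟨WithTop.coe_lt_coe.1 (h.mem_extIoo p hp).1.2, WithTop.coe_lt_coe.1 (h.mem_extIoo p hp).2.2⟩

theorem lt_and_lt_of_coe_left {x : A} {y : B} (h : RankedMatching cA cB K x hi y hi' f)
    {p : A × B} (hp : p ∈ f) : x < p.1 ∧ y < p.2 :=
  ⟨WithBot.coe_lt_coe.1 (h.mem_extIoo p hp).1.1, WithBot.coe_lt_coe.1 (h.mem_extIoo p hp).2.1⟩

theorem lt_iff_lt (h : RankedMatching cA cB K lo hi lo' hi' f) :
    ∀ p ∈ f, ∀ q ∈ f, p.1 < q.1 ↔ p.2 < q.2 := by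
  induction h with
  | nil => simp
  | node _ _ _ hf hg ihf ihg =>
    simp only [Finset.mem_insert, Finset.mem_union]
    have hleft := fun p => hf.lt_and_lt_of_coe_right (p := p)
    have hright := fun p => hg.lt_and_lt_of_coe_left (p := p)
    rintro p (rfl | hp | hp) q (rfl | hq | hq)
    all_goals grind

theorem colorSet_eq (h : RankedMatching cA cB K lo hi lo' hi' f) :
    ∀ p ∈ f, colorSet cA p.1 = colorSet cB p.2 := by
  induction h with
  | nil => simp
  | node _ _ hxy _ _ hf hg =>
    simp only [Finset.forall_mem_insert, Finset.forall_mem_union]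
    exact ⟨hxy, hf, hg⟩

theorem isPartialIso (h : RankedMatching cA cB K lo hi lo' hi' f) : IsPartialIso ι cA cB f := by
  refine fun p hp q hq => ⟨h.lt_iff_lt p hp q hq, ?_, fun k => iff_of_eq
    (congrArg (k ∈ ·) (h.colorSet_eq p hp))⟩
  have hpq := h.lt_iff_lt p hp q hq
  have hqp := h.lt_iff_lt q hq p hp
  simp only [le_antisymm_iff, ← not_lt, hpq, hqp]

theorem exists_extension
    (hK : ∀ lo hi lo' hi', rankedType cA K (extIoo lo hi) = rankedType cB K (extIoo lo' hi') →
      rankedType cA (K + 1) (extIoo lo hi) = rankedType cB (K + 1) (extIoo lo' hi'))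
    (h : RankedMatching cA cB K lo hi lo' hi' f) {a : A} (ha : a ∈ extIoo lo hi) :
    ∃ g, RankedMatching cA cB K lo hi lo' hi' g ∧ f ⊆ g ∧ ∃ b, (a, b) ∈ g := by
  induction h with
  | nil h =>
    obtain ⟨b, hb, hab, hlt, hgt⟩ := ((rankedType_succ_eq_iff cA cB K _ _).1 (hK _ _ _ _ h)).1 a ha
    rw [extIoo_inter_Iio ha, extIoo_inter_Iio hb] at hlt
    rw [extIoo_inter_Ioi ha, extIoo_inter_Ioi hb] at hgt
    exact ⟨_, node ha hb hab (nil hlt) (nil hgt), Finset.empty_subset _, b,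
      Finset.mem_insert_self _ _⟩
  | @node lo hi lo' hi' x y f g hx hy hxy hf hg ihf ihg =>
    rcases lt_trichotomy a x with hax | rfl | hxa
    · obtain ⟨f', hf', hsub, b, hb⟩ := ihf ((extIoo_inter_Iio hx).subset ⟨ha, hax⟩)
      exact ⟨_, node hx hy hxy hf' hg,
        Finset.insert_subset_insert _ (Finset.union_subset_union_left hsub), b, by simp [hb]⟩
    · exact ⟨_, node hx hy hxy hf hg, subset_rfl, y, Finset.mem_insert_self _ _⟩
    · obtain ⟨g', hg', hsub, b, hb⟩ := ihg ((extIoo_inter_Ioi hx).subset ⟨ha, hxa⟩)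
      exact ⟨_, node hx hy hxy hf hg',
        Finset.insert_subset_insert _ (Finset.union_subset_union_right hsub), b, by simp [hb]⟩

end RankedMatching

theorem backForthEquiv_of_rank
    (hK : ∀ lo hi lo' hi', rankedType cA K (extIoo lo hi) = rankedType cB K (extIoo lo' hi') →
      rankedType cA (K + 1) (extIoo lo hi) = rankedType cB (K + 1) (extIoo lo' hi'))
    (h : rankedType cA K (extIoo ⊥ ⊤) = rankedType cB K (extIoo ⊥ ⊤)) :
    BackForthEquiv ι A cA B cB := by
  refine ⟨{f | RankedMatching cA cB K ⊥ ⊤ ⊥ ⊤ f}, ⟨∅, .nil h⟩, fun f hf => hf.isPartialIso,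
    fun f hf a => hf.exists_extension hK (by simp [extIoo_bot_top]), fun f hf b => ?_⟩
  obtain ⟨g, hg, hfg, a, hab⟩ := hf.symm.exists_extension
    (fun _ _ _ _ heq => (hK _ _ _ _ heq.symm).symm) (a := b) (by simp [extIoo_bot_top])
  refine ⟨g.image Prod.swap, hg.symm, ?_, a, Finset.mem_image_of_mem Prod.swap hab⟩
  simpa [Finset.image_image] using Finset.image_subset_image (f := Prod.swap) hfg

theorem BackForthEquiv.cloIso [Countable A] [Countable B] (h : BackForthEquiv ι A cA B cB) :
    CLOIso ι A cA B cB := by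
  obtain ⟨F, ⟨f₀, hf₀⟩, hiso, hforth, hback⟩ := h
  cases nonempty_encodable A
  cases nonempty_encodable B
  let 𝒟 : A ⊕ B → Order.Cofinal F := fun s => match s with
    | Sum.inl a => ⟨{f | ∃ b, (a, b) ∈ f.1}, fun f => by
        obtain ⟨g, hg, hfg, b, hb⟩ := hforth f.1 f.2 a
        exact ⟨⟨g, hg⟩, ⟨b, hb⟩, hfg⟩⟩
    | Sum.inr b => ⟨{f | ∃ a, (a, b) ∈ f.1}, fun f => by
        obtain ⟨g, hg, hfg, a, ha⟩ := hback f.1 f.2 b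
        exact ⟨⟨g, hg⟩, ⟨a, ha⟩, hfg⟩⟩
  let I := Order.idealOfCofinals (⟨f₀, hf₀⟩ : F) 𝒟
  have hA : ∀ a, ∃ b, ∃ f ∈ I, (a, b) ∈ f.1 := fun a => by
    obtain ⟨f, ⟨b, hb⟩, hf⟩ := Order.cofinal_meets_idealOfCofinals (⟨f₀, hf₀⟩ : F) 𝒟 (Sum.inl a)
    exact ⟨b, f, hf, hb⟩
  have hB : ∀ b, ∃ a, ∃ f ∈ I, (a, b) ∈ f.1 := fun b => by
    obtain ⟨f, ⟨a, ha⟩, hf⟩ := Order.cofinal_meets_idealOfCofinals (⟨f₀, hf₀⟩ : F) 𝒟 (Sum.inr b)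
    exact ⟨a, f, hf, ha⟩
  have hpair : ∀ p q : A × B, (∃ f ∈ I, p ∈ f.1) → (∃ f ∈ I, q ∈ f.1) →
      (p.1 < q.1 ↔ p.2 < q.2) ∧ (p.1 = q.1 ↔ p.2 = q.2) ∧ ∀ k, p.1 ∈ cA k ↔ p.2 ∈ cB k := by
    rintro p q ⟨f, hf, hp⟩ ⟨g, hg, hq⟩
    obtain ⟨k, -, hfk, hgk⟩ := I.directed f hf g hg
    exact hiso k.1 k.2 p (hfk hp) q (hgk hq)
  choose u hu using hA
  choose w hw using hB
  let e : A ≃ B := ⟨u, w, fun a => (hpair (w (u a), u a) (a, u a) (hw _) (hu _)).2.1.2 rfl,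
    fun b => (hpair (w b, u (w b)) (w b, b) (hu _) (hw _)).2.1.1 rfl⟩
  let _ := CLOStr ι A cA
  let _ := CLOStr ι B cB
  refine ⟨⟨e, fun f => Empty.elim f, fun {n} r x => ?_⟩⟩
  change CLORel ι n at r
  cases r with
  | lt => exact (hpair (_, _) (_, _) (hu (x 0)) (hu (x 1))).1.symm
  | color i => exact ((hpair (_, _) (_, _) (hu (x 0)) (hu (x 0))).2.2 i).symm

end BackAndForth

theorem stmt19 {ι : Type} [Finite ι] {M₀ : Type} [LinearOrder M₀] (c₀ : ι → Set M₀)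
    (hLS : LocallySimple ι M₀ c₀) :
    Aleph0CatTheory ι (CLOTheory ι M₀ c₀) := by
  intro A B iA iB cA cB _ _ hA hB
  have hAB : CLOEquiv ι A cA B cB := cloEquiv_iff.2 (hA.trans hB.symm)
  obtain ⟨K, hK⟩ := exists_rank_of_locallySimple hLS
  have hrank : rankedType cB K (extIoo ⊥ ⊤) = rankedType cA K (extIoo ⊥ ⊤) :=
    ((UniformlyDefinable.rankedType_extIoo K (⊥ : WithBot Empty) ⊤ _).iff_of_cloEquiv hAB
      Empty.elim Empty.elim).1 rfl
  exact (backForthEquiv_of_rank (hK A B cA cB (cloEquiv_iff.2 hA) (cloEquiv_iff.2 hB))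
    hrank.symm).cloIso
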